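/- arXiv:2504.00529 — 2 statements merged into one kernel-verified Lean document; each statement's English description precedes it below -/
import Mathlib

section
/- Let Γ be a finite extensive-form game with perfect recall. A behavioral strategy profile β* is a Nash equilibrium in behavioral strategies if and only if there exist a behavioral strategy profile β̃*, a belief system μ*, and multipliers λ*, λ̃*, ζ*, ζ̃* such that (β*, β̃*, μ*, λ*, λ̃*, ζ*, ζ̃*) solves the system: u^i((a, ϱ^i_{I_i^j}(β^{-I_i^j}, β̃)) ∧ I_i^j) + λ^i_{I_i^j}(a) − ζ^i_{I_i^j} = 0 and u^i(a, ϱ^i_{I_i^j}(β^{-I_i^j}, β̃), μ | I_i^j) + λ̃^i_{I_i^j}(a) − ζ̃^i_{I_i^j} = 0 for all i ∈ N, j ∈ M_i, a ∈ A(I_i^j); S^i(I_i^j|β) μ^i_{I_i^j}(h) = S^i(h|β) and μ^i_{I_i^j}(h) ≥ 0 for all i, j, h ∈ I_i^j; Σ_{h ∈ I_i^j} μ^i_{I_i^j}(h) = 1, Σ_{a ∈ A(I_i^j)} β^i_{I_i^j}(a) = 1, Σ_{a ∈ A(I_i^j)} β̃^i_{I_i^j}(a) = 1 for all i, j; β^i_{I_i^j}(a)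 λ^i_{I_i^j}(a) = 0, β̃^i_{I_i^j}(a) λ̃^i_{I_i^j}(a) = 0, and β^i_{I_i^j}(a) ≥ 0, λ^i_{I_i^j}(a) ≥ 0, β̃^i_{I_i^j}(a) ≥ 0, λ̃^i_{I_i^j}(a) ≥ 0 for all i, j, a ∈ A(I_i^j). -/
open scoped Classical

noncomputable section

/-- A finite extensive-form game.  Actions are labelled by natural numbers drawn from the
finite pool `actFinset`; a history is the list of actions taken so far; players are `Fin n`
and `P h = none` means that the chance player moves after `h`.  The information sets of
player `i` are `Info i j` for `j < m i`, and `infoIdx h` is the index of the information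
set containing a nonterminal history `h` at which some player moves.  Payoffs `u i h` are
relevant on terminal histories. -/
structure EFG where
  n : ℕ
  actFinset : Finset ℕ
  H : Finset (List ℕ)
  P : List ℕ → Option (Fin n)
  fc : List ℕ → ℕ → ℝ
  m : Fin n → ℕ
  Info : Fin n → ℕ → Finset (List ℕ)
  infoIdx : List ℕ → ℕ
  u : Fin n → List ℕ → ℝ
  empty_mem : ([] : List ℕ) ∈ H
  prefixClosed : ∀ h ∈ H, ∀ h' : List ℕ, h' <+: h → h' ∈ H
  act_mem : ∀ (h : List ℕ) (a : ℕ), h ++ [a] ∈ H → a ∈ actFinset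
  fc_nonneg : ∀ h a, 0 ≤ fc h a
  fc_sum : ∀ h ∈ H, P h = none → (∃ a, h ++ [a] ∈ H) →
    ∑ a ∈ actFinset.filter (fun a => h ++ [a] ∈ H), fc h a = 1
  info_spec : ∀ (i : Fin n) (j : ℕ) (h : List ℕ), j < m i →
    (h ∈ Info i j ↔ h ∈ H ∧ P h = some i ∧ (∃ a, h ++ [a] ∈ H) ∧ infoIdx h = j)
  infoIdx_lt : ∀ (i : Fin n), ∀ h ∈ H, P h = some i → (∃ a, h ++ [a] ∈ H) → infoIdx h < m i
  info_nonempty : ∀ (i : Fin n) (j : ℕ), j < m i → (Info i j).Nonempty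
  info_actions : ∀ (i : Fin n) (j : ℕ), j < m i → ∀ h ∈ Info i j, ∀ h' ∈ Info i j,
    ∀ a : ℕ, (h ++ [a] ∈ H ↔ h' ++ [a] ∈ H)
  act_unique : ∀ (h h' : List ℕ) (a : ℕ), h ∈ H → h' ∈ H → h ++ [a] ∈ H → h' ++ [a] ∈ H →
    P h = P h' ∧ infoIdx h = infoIdx h'

namespace EFG

/-- Behavioral strategy profiles (player, information-set index, action ↦ probability). -/
abbrev Profile (G : EFG) : Type := Fin G.n → ℕ → ℕ → ℝ

/-- Belief systems (player, information-set index, history ↦ probability). -/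
abbrev Belief (G : EFG) : Type := Fin G.n → ℕ → List ℕ → ℝ

variable (G : EFG)

/-- The set `Z` of terminal histories. -/
def Zset : Finset (List ℕ) := G.H.filter fun h => ∀ a : ℕ, h ++ [a] ∉ G.H

/-- The set `A(h)` of actions available after a history. -/
def A (h : List ℕ) : Finset ℕ := G.actFinset.filter fun a => h ++ [a] ∈ G.H

/-- The common action set `A(I_i^j)` of an information set. -/
def infoA (i : Fin G.n) (j : ℕ) : Finset ℕ := (G.Info i j).sup fun h => G.A h

/-- A behavioral strategy of player `i`: a probability distribution on `A(I_i^j)` for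
each information set `I_i^j`. -/
def IsBehStrategy (i : Fin G.n) (b : ℕ → ℕ → ℝ) : Prop :=
  ∀ j < G.m i, (∀ a ∈ G.infoA i j, 0 ≤ b j a) ∧ ∑ a ∈ G.infoA i j, b j a = 1

/-- A behavioral strategy profile. -/
def IsBehProfile (β : G.Profile) : Prop := ∀ i : Fin G.n, G.IsBehStrategy i (β i)

/-- The probability of action `a` at history `h`: the chance distribution if the chance
player moves, and the mover's behavioral strategy otherwise. -/
def moveProb (β : G.Profile) (h : List ℕ) (a : ℕ) : ℝ :=
  (G.P h).elim (G.fc h a) fun i => β i (G.infoIdx h) a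

/-- Player `i`'s record `X_i` of the information sets he encounters along a history and the
actions he takes at them, accumulated starting from the prefix `pre`. -/
def recordFrom (i : Fin G.n) : List ℕ → List ℕ → List (ℕ × ℕ)
  | _, [] => []
  | pre, b :: rest =>
    (if G.P pre = some i then [(G.infoIdx pre, b)] else []) ++ recordFrom i (pre ++ [b]) rest

/-- Perfect recall. -/
def PerfectRecall : Prop :=
  ∀ (i : Fin G.n) (j : ℕ), j < G.m i →
    ∀ h ∈ G.Info i j, ∀ h' ∈ G.Info i j, G.recordFrom i [] h = G.recordFrom i [] h'

/-- Product of the move probabilities along `rest`, continuing from the prefix `pre`. -/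
def prodAlong (β : G.Profile) : List ℕ → List ℕ → ℝ
  | _, [] => 1
  | pre, b :: rest => G.moveProb β pre b * prodAlong β (pre ++ [b]) rest

/-- `ω(h|β)`: the probability that the moves along `h` are played under `β`. -/
def omega (β : G.Profile) (h : List ℕ) : ℝ := G.prodAlong β [] h

/-- `ω(I_i^j|β)`. -/
def omegaInfo (i : Fin G.n) (j : ℕ) (β : G.Profile) : ℝ := ∑ h ∈ G.Info i j, G.omega β h

/-- Product of the move probabilities along `rest` from `pre`, disregarding player `i`'s
own moves. -/
def prodAlongNot (i : Fin G.n) (β : G.Profile) : List ℕ → List ℕ → ℝ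
  | _, [] => 1
  | pre, b :: rest =>
    (if G.P pre = some i then 1 else G.moveProb β pre b) * prodAlongNot i β (pre ++ [b]) rest

/-- `S^i(h|β)`: probability of the moves along `h`, disregarding player `i`'s own moves. -/
def Sh (i : Fin G.n) (β : G.Profile) (h : List ℕ) : ℝ := G.prodAlongNot i β [] h

/-- `S^i(I_i^j|β)`. -/
def SInfo (i : Fin G.n) (j : ℕ) (β : G.Profile) : ℝ := ∑ h ∈ G.Info i j, G.Sh i β h

/-- Product of the move probabilities along `rest` from `pre`, with the factor at prefixes
lying in `I_i^j` omitted. -/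
def prodAlongSkip (i : Fin G.n) (j : ℕ) (β : G.Profile) : List ℕ → List ℕ → ℝ
  | _, [] => 1
  | pre, b :: rest =>
    (if pre ∈ G.Info i j then 1 else G.moveProb β pre b) * prodAlongSkip i j β (pre ++ [b]) rest

/-- `q ∈ M(a, I_i^j)`: `I_i^q` is a first information set of player `i` after action `a`
(every history in `I_i^q` contains `a`, with no later action of `a` lying in any action set
of player `i`). -/
def FirstAfter (i : Fin G.n) (a : ℕ) (q : ℕ) : Prop :=
  q < G.m i ∧ ∀ h ∈ G.Info i q, ∃ l₁ l₂ : List ℕ,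
    h = l₁ ++ a :: l₂ ∧ ∀ b ∈ l₂, ∀ p < G.m i, b ∉ G.infoA i p

/-- `q ∈ M(I_i^j) = ∪_{a ∈ A(I_i^j)} M(a, I_i^j)`. -/
def MInfo (i : Fin G.n) (j : ℕ) (q : ℕ) : Prop := ∃ a ∈ G.infoA i j, G.FirstAfter i a q

/-- `q ∈ Λ(a, I_i^j)`: every history in `I_i^q` contains the action `a`. -/
def LambdaSet (i : Fin G.n) (a : ℕ) (q : ℕ) : Prop :=
  q < G.m i ∧ ∀ h ∈ G.Info i q, ∃ l₁ l₂ : List ℕ, h = l₁ ++ a :: l₂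

/-- `ϱ^i_{I_i^j}(β, β̃)`: replace player `i`'s component of `β` by that of `β̃` at every
information set `I_i^q` such that some history in `I_i^q` contains an action of `A(I_i^j)`. -/
def rho (i : Fin G.n) (j : ℕ) (β βt : G.Profile) : G.Profile := fun p q =>
  if p = i ∧ ∃ h ∈ G.Info i q, ∃ b ∈ h, b ∈ G.infoA i j then βt i q else β p q

/-- A belief system: a probability distribution on each information set. -/
def IsBelief (μ : G.Belief) : Prop :=
  ∀ (i : Fin G.n) (j : ℕ), j < G.m i →
    (∀ h ∈ G.Info i j, 0 ≤ μ i j h) ∧ ∑ h ∈ G.Info i j, μ i j h = 1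

/-- A self-independent belief system for `β`:
`S^i(I_i^j|β) · μ^i_{I_i^j}(h) = S^i(h|β)`. -/
def SelfIndep (β : G.Profile) (μ : G.Belief) : Prop :=
  ∀ (i : Fin G.n) (j : ℕ), j < G.m i → ∀ h ∈ G.Info i j,
    G.SInfo i j β * μ i j h = G.Sh i β h

/-- Auxiliary for `ν`: scan `rest` from `pre` for the subhistory lying in `I_i^j`, then
weight by the belief and multiply the move probabilities of the remaining moves (the move
taken at the subhistory itself being skipped). -/
def nuAux (i : Fin G.n) (j : ℕ) (β : G.Profile) (w : List ℕ → ℝ) : List ℕ → List ℕ → ℝ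
  | _, [] => 0
  | pre, b :: rest =>
    if pre ∈ G.Info i j then w pre * G.prodAlong β (pre ++ [b]) rest
    else nuAux i j β w (pre ++ [b]) rest

/-- `ν^i_{I_i^j}(h | a, β^{-I_i^j}, μ)` (it does not involve the component of `β` at
`I_i^j`). -/
def nu (i : Fin G.n) (j : ℕ) (β : G.Profile) (μ : G.Belief) (h : List ℕ) : ℝ :=
  G.nuAux i j β (μ i j) [] h

/-- `u^i((a, β^{-I_i^j}) ∧ I_i^j)`. -/
def uWedgeAct (i : Fin G.n) (j : ℕ) (a : ℕ) (β : G.Profile) : ℝ :=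
  ∑ h ∈ G.Zset.filter (fun h => a ∈ h), G.u i h * G.prodAlongSkip i j β [] h

/-- `u^i(β ∧ I_i^j)`. -/
def uWedge (i : Fin G.n) (j : ℕ) (β : G.Profile) : ℝ :=
  ∑ h ∈ G.Zset.filter (fun h => ∃ b ∈ h, b ∈ G.infoA i j), G.u i h * G.omega β h

/-- The conditional expected payoff `u^i(a, β^{-I_i^j}, μ | I_i^j)`. -/
def uCond (i : Fin G.n) (j : ℕ) (a : ℕ) (β : G.Profile) (μ : G.Belief) : ℝ :=
  ∑ h ∈ G.Zset.filter (fun h => a ∈ h), G.u i h * G.nu i j β μ h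

/-- The expected payoff `u^i(β)`. -/
def uExp (i : Fin G.n) (β : G.Profile) : ℝ := ∑ h ∈ G.Zset, G.u i h * G.omega β h

/-- The profile obtained from `β` by replacing all of player `i`'s components by `b`. -/
def replace (β : G.Profile) (i : Fin G.n) (b : ℕ → ℕ → ℝ) : G.Profile :=
  fun p => if p = i then b else β p

/-- `β` is a Nash equilibrium in behavioral strategies. -/
def IsNash (β : G.Profile) : Prop :=
  G.IsBehProfile β ∧ ∀ (i : Fin G.n) (b : ℕ → ℕ → ℝ), G.IsBehStrategy i b →
    G.uExp i (G.replace β i b) ≤ G.uExp i β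

/-- `(β, β̃, μ)` satisfies the Nash characterization (Definition 2 of the paper). -/
def NashChar (β βt : G.Profile) (μ : G.Belief) : Prop :=
  (∀ (i : Fin G.n) (j : ℕ), j < G.m i → ∀ a' ∈ G.infoA i j, ∀ a'' ∈ G.infoA i j,
    G.uWedgeAct i j a' (G.rho i j β βt) < G.uWedgeAct i j a'' (G.rho i j β βt) →
    β i j a' = 0) ∧
  (∀ (i : Fin G.n) (j : ℕ), j < G.m i → ∀ a' ∈ G.infoA i j, ∀ a'' ∈ G.infoA i j,
    G.uCond i j a' (G.rho i j β βt) μ < G.uCond i j a'' (G.rho i j β βt) μ →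
    βt i j a' = 0) ∧
  G.IsBelief μ ∧ G.SelfIndep β μ

/-- `r` is the root of a subgame: every information set lies entirely inside or entirely
outside the set of histories extending `r`. -/
def IsSubgameRoot (r : List ℕ) : Prop :=
  r ∈ G.H ∧ ∀ (i : Fin G.n) (j : ℕ), j < G.m i →
    (∀ h ∈ G.Info i j, r <+: h) ∨ ∀ h ∈ G.Info i j, ¬ r <+: h

/-- The depth `g` of the smallest subgame containing `A(I_i^j)` (the length of the longest
subgame root preceding every history of `I_i^j`). -/
def sgDepthInfo (i : Fin G.n) (j : ℕ) : ℕ :=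
  (G.H.filter fun r => G.IsSubgameRoot r ∧ ∀ h ∈ G.Info i j, r <+: h).sup List.length

/-- The depth `q(h)` of the smallest subgame containing the last action of `h`. -/
def sgDepthHist (h : List ℕ) : ℕ :=
  (G.H.filter fun r => G.IsSubgameRoot r ∧ r <+: h.dropLast).sup List.length

/-- `C^i_{I_i^j}(h|β)`: product of move probabilities along `h` within the smallest subgame
containing `A(I_i^j)`. -/
def Ch (i : Fin G.n) (j : ℕ) (β : G.Profile) (h : List ℕ) : ℝ :=
  G.prodAlong β (h.take (G.sgDepthInfo i j)) (h.drop (G.sgDepthInfo i j))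

/-- `C^i_{I_i^j}(I_i^j|β)`. -/
def CInfo (i : Fin G.n) (j : ℕ) (β : G.Profile) : ℝ := ∑ h ∈ G.Info i j, G.Ch i j β h

/-- `u^i((a, β^{-I_i^j}) ⋄ I_i^j)`. -/
def uDiamondAct (i : Fin G.n) (j : ℕ) (a : ℕ) (β : G.Profile) : ℝ :=
  ∑ h ∈ G.Zset.filter (fun h => a ∈ h), G.u i h *
    G.prodAlongSkip i j β (h.take (G.sgDepthInfo i j)) (h.drop (G.sgDepthInfo i j))

/-- `Y^i(h|β)`: like `S^i(h|β)` but within the smallest subgame containing the last action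
of `h`. -/
def Yh (i : Fin G.n) (β : G.Profile) (h : List ℕ) : ℝ :=
  G.prodAlongNot i β (h.take (G.sgDepthHist h)) (h.drop (G.sgDepthHist h))

/-- `Y^i(I_i^j|β)`. -/
def YInfo (i : Fin G.n) (j : ℕ) (β : G.Profile) : ℝ := ∑ h ∈ G.Info i j, G.Yh i β h

/-- The belief condition `Y^i(I_i^j|β) · μ^i_{I_i^j}(h) = Y^i(h|β)`. -/
def YConsistent (β : G.Profile) (μ : G.Belief) : Prop :=
  ∀ (i : Fin G.n) (j : ℕ), j < G.m i → ∀ h ∈ G.Info i j,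
    G.YInfo i j β * μ i j h = G.Yh i β h

/-- The expected payoff of player `i` in the subgame rooted at `r` (payoffs of terminal
histories extending `r`, weighted by the move probabilities within the subgame). -/
def uExpFrom (i : Fin G.n) (β : G.Profile) (r : List ℕ) : ℝ :=
  ∑ h ∈ G.Zset.filter (fun h => r <+: h), G.u i h * G.prodAlong β r (h.drop r.length)

/-- `β` is a subgame perfect equilibrium in behavioral strategies: its restriction to every
subgame is a Nash equilibrium in behavioral strategies of that subgame. -/
def IsSubgamePerfect (β : G.Profile) : Prop :=
  G.IsBehProfile β ∧ ∀ r : List ℕ, G.IsSubgameRoot r →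
    ∀ (i : Fin G.n) (b : ℕ → ℕ → ℝ), G.IsBehStrategy i b →
      G.uExpFrom i (G.replace β i b) r ≤ G.uExpFrom i β r

/-- `(β, β̃, μ)` satisfies the subgame perfect characterization (Definition 6 of the
paper). -/
def SubgameChar (β βt : G.Profile) (μ : G.Belief) : Prop :=
  (∀ (i : Fin G.n) (j : ℕ), j < G.m i → ∀ a' ∈ G.infoA i j, ∀ a'' ∈ G.infoA i j,
    G.uDiamondAct i j a' (G.rho i j β βt) < G.uDiamondAct i j a'' (G.rho i j β βt) →
    β i j a' = 0) ∧
  (∀ (i : Fin G.n) (j : ℕ), j < G.m i → ∀ a' ∈ G.infoA i j, ∀ a'' ∈ G.infoA i j,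
    G.uCond i j a' (G.rho i j β βt) μ < G.uCond i j a'' (G.rho i j β βt) μ →
    βt i j a' = 0) ∧
  G.IsBelief μ ∧ G.YConsistent β μ

/-- `(β, μ)` is a semi-sequential equilibrium. -/
def SemiSeqEq (β : G.Profile) (μ : G.Belief) : Prop :=
  G.IsBehProfile β ∧ G.IsBelief μ ∧ G.SelfIndep β μ ∧
  ∀ (i : Fin G.n) (j : ℕ), j < G.m i → ∀ a' ∈ G.infoA i j, ∀ a'' ∈ G.infoA i j,
    G.uCond i j a' β μ < G.uCond i j a'' β μ → β i j a' = 0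

/-- `(β, μ)` is a subgame perfect semi-sequential equilibrium. -/
def SubgameSemiSeqEq (β : G.Profile) (μ : G.Belief) : Prop :=
  G.IsBehProfile β ∧ G.IsBelief μ ∧ G.YConsistent β μ ∧
  ∀ (i : Fin G.n) (j : ℕ), j < G.m i → ∀ a' ∈ G.infoA i j, ∀ a'' ∈ G.infoA i j,
    G.uCond i j a' β μ < G.uCond i j a'' β μ → β i j a' = 0

/-- `d(I_i^j)`: the number of information sets of player `i` containing a prefix of some
history of `I_i^j` (counting `I_i^j` itself). -/
def dInfo (i : Fin G.n) (j : ℕ) : ℕ :=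
  ((Finset.range (G.m i)).filter
    (fun q => ∃ h ∈ G.Info i j, ∃ p : List ℕ, p <+: h ∧ p ∈ G.Info i q)).card

end EFG

namespace EFG

/-- Product of the strategy weights along a record. -/
def own (b : ℕ → ℕ → ℝ) (L : List (ℕ × ℕ)) : ℝ := (L.map fun x => b x.1 x.2).prod

theorem own_nil (b : ℕ → ℕ → ℝ) : own b [] = 1 := by simp [own]

theorem own_append (b : ℕ → ℕ → ℝ) (L M : List (ℕ × ℕ)) :
    own b (L ++ M) = own b L * own b M := by simp [own]

theorem recordFrom_append (G : EFG) (i : Fin G.n) (l₁ l₂ pre : List ℕ) :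
    G.recordFrom i pre (l₁ ++ l₂) = G.recordFrom i pre l₁ ++ G.recordFrom i (pre ++ l₁) l₂ := by
  induction l₁ generalizing pre with
  | nil => simp [recordFrom]
  | cons b l ih => simp [recordFrom, ih]

theorem prodAlong_append (G : EFG) (β : G.Profile) (l₁ l₂ pre : List ℕ) :
    G.prodAlong β pre (l₁ ++ l₂) = G.prodAlong β pre l₁ * G.prodAlong β (pre ++ l₁) l₂ := by
  induction l₁ generalizing pre with
  | nil => simp [prodAlong]
  | cons b l ih => simp [prodAlong, ih, mul_assoc]

theorem prodAlongNot_append (G : EFG) (i : Fin G.n) (β : G.Profile) (l₁ l₂ pre : List ℕ) :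
    G.prodAlongNot i β pre (l₁ ++ l₂)
      = G.prodAlongNot i β pre l₁ * G.prodAlongNot i β (pre ++ l₁) l₂ := by
  induction l₁ generalizing pre with
  | nil => simp [prodAlongNot]
  | cons b l ih => simp [prodAlongNot, ih, mul_assoc]

theorem prodAlongSkip_append (G : EFG) (i : Fin G.n) (j : ℕ) (β : G.Profile)
    (l₁ l₂ pre : List ℕ) :
    G.prodAlongSkip i j β pre (l₁ ++ l₂)
      = G.prodAlongSkip i j β pre l₁ * G.prodAlongSkip i j β (pre ++ l₁) l₂ := by
  induction l₁ generalizing pre with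
  | nil => simp [prodAlongSkip]
  | cons b l ih => simp [prodAlongSkip, ih, mul_assoc]

theorem prodAlong_eq (G : EFG) (i : Fin G.n) (β : G.Profile) (l pre : List ℕ) :
    G.prodAlong β pre l = G.prodAlongNot i β pre l * own (β i) (G.recordFrom i pre l) := by
  induction l generalizing pre with
  | nil => simp [prodAlong, prodAlongNot, recordFrom, own]
  | cons b l ih =>
    by_cases hP : G.P pre = some i
    · simp only [prodAlong, prodAlongNot, recordFrom, hP, if_true, own_append, ih]
      simp [own, moveProb, hP]; ring
    · simp only [prodAlong, prodAlongNot, recordFrom, hP, if_false, own_append, ih]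
      simp [own]; ring

theorem prodAlongNot_congr (G : EFG) (i : Fin G.n) (β γ : G.Profile)
    (hb : ∀ p, p ≠ i → β p = γ p) (l pre : List ℕ) :
    G.prodAlongNot i β pre l = G.prodAlongNot i γ pre l := by
  induction l generalizing pre with
  | nil => simp [prodAlongNot]
  | cons b l ih =>
    simp only [prodAlongNot, ih]
    by_cases hP : G.P pre = some i
    · simp [hP]
    · simp only [hP, if_false]
      congr 1
      unfold moveProb
      cases hq : G.P pre with
      | none => rfl
      | some p =>
        have : p ≠ i := by rintro rfl; exact hP hq
        simp [hb p this]

theorem rho_other (G : EFG) (i : Fin G.n) (j : ℕ) (β βt : G.Profile) (p : Fin G.n) (hp : p ≠ i) :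
    G.rho i j β βt p = β p := by
  funext q; simp [rho, hp]

theorem own_congr (G : EFG) (i : Fin G.n) (b b' : ℕ → ℕ → ℝ) (l pre : List ℕ)
    (hh : ∀ p c s, l = p ++ c :: s → G.P (pre ++ p) = some i →
      b (G.infoIdx (pre ++ p)) c = b' (G.infoIdx (pre ++ p)) c) :
    own b (G.recordFrom i pre l) = own b' (G.recordFrom i pre l) := by
  induction l generalizing pre with
  | nil => simp [recordFrom, own]
  | cons x l ih =>
    simp only [recordFrom, own_append]
    rw [ih (pre ++ [x])]
    · congr 1
      by_cases hP : G.P pre = some i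
      · have := hh [] x l (by simp) (by simpa using hP)
        simp [hP, own]; simpa using this
      · simp [hP, own]
    · intro p c s hl hP
      have := hh (x :: p) c s (by simp [hl]) (by simpa using hP)
      simpa using this

theorem own_nonneg (G : EFG) (i : Fin G.n) (b : ℕ → ℕ → ℝ) (l pre : List ℕ)
    (hh : ∀ p c s, l = p ++ c :: s → G.P (pre ++ p) = some i →
      0 ≤ b (G.infoIdx (pre ++ p)) c) :
    0 ≤ own b (G.recordFrom i pre l) := by
  induction l generalizing pre with
  | nil => simp [recordFrom, own]
  | cons x l ih =>
    simp only [recordFrom, own_append]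
    refine mul_nonneg ?_ (ih _ ?_)
    · by_cases hP : G.P pre = some i
      · have := hh [] x l (by simp) (by simpa using hP)
        simp [hP, own]; simpa using this
      · simp [hP, own]
    · intro p c s hl hP
      have := hh (x :: p) c s (by simp [hl]) (by simpa using hP)
      simpa using this

/-! Structure of histories -/

theorem mem_infoA (G : EFG) (i : Fin G.n) (j : ℕ) (hj : j < G.m i) (h : List ℕ)
    (hh : h ∈ G.Info i j) (a : ℕ) : a ∈ G.infoA i j ↔ h ++ [a] ∈ G.H := by
  unfold infoA A
  rw [Finset.mem_sup]
  constructor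
  · rintro ⟨h', hh', ha⟩
    exact (G.info_actions i j hj h' hh' h hh a).1 (Finset.mem_filter.1 ha).2
  · intro ha
    exact ⟨h, hh, Finset.mem_filter.2 ⟨G.act_mem _ _ ha, ha⟩⟩

theorem mem_H_left (G : EFG) {l₁ l₂ : List ℕ} (h : l₁ ++ l₂ ∈ G.H) : l₁ ∈ G.H :=
  G.prefixClosed _ h _ (List.prefix_append _ _)

theorem mem_H_cons (G : EFG) {l₁ l₂ : List ℕ} {a : ℕ} (h : l₁ ++ a :: l₂ ∈ G.H) :
    l₁ ++ [a] ∈ G.H :=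
  G.prefixClosed _ h _ ⟨l₂, by simp⟩

/-- A nonterminal history of player `i` lies in its information set. -/
theorem mem_info (G : EFG) (i : Fin G.n) {p : List ℕ} {c : ℕ} (h : p ++ [c] ∈ G.H)
    (hP : G.P p = some i) :
    G.infoIdx p < G.m i ∧ p ∈ G.Info i (G.infoIdx p) ∧ c ∈ G.infoA i (G.infoIdx p) := by
  have hp := G.mem_H_left h
  have h1 := G.infoIdx_lt i p hp hP ⟨c, h⟩
  have h2 := (G.info_spec i _ p h1).2 ⟨hp, hP, ⟨c, h⟩, rfl⟩
  exact ⟨h1, h2, (G.mem_infoA i _ h1 p h2 c).2 h⟩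

theorem info_of_act (G : EFG) (i : Fin G.n) (j : ℕ) (hj : j < G.m i) {a : ℕ}
    (ha : a ∈ G.infoA i j) {p : List ℕ} (h : p ++ [a] ∈ G.H) :
    p ∈ G.Info i j ∧ G.P p = some i ∧ G.infoIdx p = j := by
  obtain ⟨q, hq⟩ := G.info_nonempty i j hj
  have hqa := (G.mem_infoA i j hj q hq a).1 ha
  have hs := (G.info_spec i j q hj).1 hq
  have := G.act_unique p q a (G.mem_H_left h) hs.1 h hqa
  have h1 : G.P p = some i := this.1.trans hs.2.1
  have h2 : G.infoIdx p = j := this.2.trans hs.2.2.2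
  exact ⟨(G.info_spec i j p hj).2 ⟨G.mem_H_left h, h1, ⟨a, h⟩, h2⟩, h1, h2⟩

/-- Length of the record. -/
def rk (G : EFG) (i : Fin G.n) (h : List ℕ) : ℕ := (G.recordFrom i [] h).length

theorem rk_lt (G : EFG) (i : Fin G.n) (p : List ℕ) (c : ℕ) (s : List ℕ) (hP : G.P p = some i) :
    G.rk i p < G.rk i (p ++ c :: s) := by
  simp [rk, recordFrom_append, recordFrom, hP]

theorem rk_eq (G : EFG) (hPR : G.PerfectRecall) (i : Fin G.n) (j : ℕ) (hj : j < G.m i)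
    {p q : List ℕ} (hp : p ∈ G.Info i j) (hq : q ∈ G.Info i j) : G.rk i p = G.rk i q := by
  unfold rk; rw [hPR i j hj p hp q hq]

theorem info_P (G : EFG) (i : Fin G.n) (j : ℕ) (hj : j < G.m i)
    {p : List ℕ} (hp : p ∈ G.Info i j) : G.P p = some i ∧ G.infoIdx p = j ∧ p ∈ G.H := by
  have := (G.info_spec i j p hj).1 hp
  exact ⟨this.2.1, this.2.2.2, this.1⟩

theorem act_not_mem (G : EFG) (hPR : G.PerfectRecall) (i : Fin G.n) {p : List ℕ} {c : ℕ}
    (h : p ++ [c] ∈ G.H) (hP : G.P p = some i) : c ∉ p := by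
  intro hc
  obtain ⟨l₁, l₂, rfl⟩ := List.append_of_mem hc
  obtain ⟨h1, h2, h3⟩ := G.mem_info i h hP
  have h4 := G.info_of_act i _ h1 h3 (G.mem_H_cons (G.mem_H_left h))
  have h5 := G.rk_eq hPR i _ h1 h2 h4.1
  have h6 := G.rk_lt i l₁ c l₂ h4.2.1
  omega

/-- The part of `h` before `a`. -/
def bef (a : ℕ) (h : List ℕ) : List ℕ := h.take (h.idxOf a)

/-- The part of `h` after `a`. -/
def aftl (a : ℕ) (h : List ℕ) : List ℕ := h.drop (h.idxOf a + 1)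

theorem split_eq {a : ℕ} {h : List ℕ} (ha : a ∈ h) : bef a h ++ a :: aftl a h = h := by
  have hlt := List.idxOf_lt_length_iff.2 ha
  have := List.take_append_drop (h.idxOf a) h
  rw [List.drop_eq_getElem_cons hlt, List.getElem_idxOf] at this
  exact this

theorem bef_append {a : ℕ} {h : List ℕ} (ha : a ∈ h) (t : List ℕ) : bef a (h ++ t) = bef a h := by
  have hlt := List.idxOf_lt_length_iff.2 ha
  unfold bef
  rw [List.idxOf_append_of_mem ha, List.take_append_of_le_length hlt.le]

theorem aftl_append {a : ℕ} {h : List ℕ} (ha : a ∈ h) (t : List ℕ) :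
    aftl a (h ++ t) = aftl a h ++ t := by
  have hlt := List.idxOf_lt_length_iff.2 ha
  unfold aftl
  rw [List.idxOf_append_of_mem ha, List.drop_append_of_le_length hlt]

theorem bef_new {a : ℕ} {h : List ℕ} (ha : a ∉ h) : bef a (h ++ [a]) = h := by
  unfold bef
  rw [List.idxOf_append_of_notMem ha]; simp

theorem aftl_new {a : ℕ} {h : List ℕ} (ha : a ∉ h) : aftl a (h ++ [a]) = [] := by
  unfold aftl
  rw [List.idxOf_append_of_notMem ha]; simp

/-- Product of player `i`'s own weights after `a`. -/
def aft (G : EFG) (i : Fin G.n) (b : ℕ → ℕ → ℝ) (a : ℕ) (h : List ℕ) : ℝ :=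
  own b (G.recordFrom i (bef a h ++ [a]) (aftl a h))

theorem aft_append (G : EFG) (i : Fin G.n) (b : ℕ → ℕ → ℝ) {a : ℕ} {h : List ℕ} (ha : a ∈ h)
    (t : List ℕ) : G.aft i b a (h ++ t) = G.aft i b a h * own b (G.recordFrom i h t) := by
  unfold aft
  rw [bef_append ha, aftl_append ha, recordFrom_append, own_append]
  congr 3
  conv_rhs => rw [← split_eq ha]
  simp

theorem aft_new (G : EFG) (i : Fin G.n) (b : ℕ → ℕ → ℝ) {a : ℕ} {h : List ℕ} (ha : a ∉ h) :
    G.aft i b a (h ++ [a]) = 1 := by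
  unfold aft
  rw [aftl_new ha]; simp [recordFrom, own]

/-- One summand of the telescoping identity. -/
def telTerm (G : EFG) (i : Fin G.n) (b bt : ℕ → ℕ → ℝ) (p : List ℕ) (j a : ℕ) : ℝ :=
  if a ∈ p then own b (G.recordFrom i [] (bef a p)) * (b j a - bt j a) * G.aft i bt a p else 0

theorem telescope (G : EFG) (hPR : G.PerfectRecall) (i : Fin G.n) (b bt : ℕ → ℕ → ℝ)
    (p : List ℕ) (hp : p ∈ G.H) :
    own b (G.recordFrom i [] p) - own bt (G.recordFrom i [] p)
      = ∑ j ∈ Finset.range (G.m i), ∑ a ∈ G.infoA i j, G.telTerm i b bt p j a := by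
  induction p using List.reverseRecOn with
  | nil => simp [recordFrom, own, telTerm]
  | append_singleton p c ih =>
    have ih := ih (G.mem_H_left hp)
    rw [recordFrom_append, own_append, own_append, List.nil_append]
    by_cases hP : G.P p = some i
    · obtain ⟨h1, h2, h3⟩ := G.mem_info i hp hP
      have hc := G.act_not_mem hPR i hp hP
      have key : ∀ j ∈ Finset.range (G.m i), ∀ a ∈ G.infoA i j,
          G.telTerm i b bt (p ++ [c]) j a = G.telTerm i b bt p j a * bt (G.infoIdx p) c +
            (if G.infoIdx p = j then (if c = a then own b (G.recordFrom i [] p) *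
              (b (G.infoIdx p) c - bt (G.infoIdx p) c) else 0) else 0) := by
        intro j hj a ha
        have hj := Finset.mem_range.1 hj
        by_cases hap : a ∈ p
        · have hca : c ≠ a := by rintro rfl; exact hc hap
          have hap' : a ∈ p ++ [c] := by simp [hap]
          simp only [telTerm, hap, hap', if_true, hca, if_false, bef_append hap, aft_append G i bt hap]
          simp [recordFrom, hP, own]; ring
        · by_cases hca : c = a
          · subst hca
            have := (G.info_of_act i j hj ha hp).2.2
            have hap' : c ∈ p ++ [c] := by simp
            simp only [telTerm, hap, hap', if_true, if_false, this, bef_new hap, aft_new G i bt hap]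
            ring
          · have hap' : a ∉ p ++ [c] := by simp [hap]; exact fun h => hca h.symm
            simp [telTerm, hap, hap', hca]
      rw [Finset.sum_congr rfl fun j hj => Finset.sum_congr rfl (key j hj)]
      simp only [Finset.sum_add_distrib, ← Finset.sum_mul]
      rw [← ih]
      have h4 : ∑ j ∈ Finset.range (G.m i), ∑ a ∈ G.infoA i j,
          (if G.infoIdx p = j then (if c = a then own b (G.recordFrom i [] p) *
              (b (G.infoIdx p) c - bt (G.infoIdx p) c) else 0) else 0) =
          own b (G.recordFrom i [] p) * (b (G.infoIdx p) c - bt (G.infoIdx p) c) := by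
        rw [Finset.sum_eq_single (G.infoIdx p)]
        · simp only [if_true]
          rw [Finset.sum_eq_single c]
          · simp
          · intro a _ hne; simp [hne.symm]
          · intro h; exact absurd h3 h
        · intro j _ hne
          simp [hne.symm]
        · intro h; exact absurd (Finset.mem_range.2 h1) h
      rw [h4]
      simp [recordFrom, hP, own]; ring
    · have h0 : G.recordFrom i p [c] = [] := by simp [recordFrom, hP]
      rw [h0, own_nil, own_nil, mul_one, mul_one, ih]
      refine Finset.sum_congr rfl fun j hj => Finset.sum_congr rfl fun a ha => ?_
      have hca : a ≠ c := by
        rintro rfl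
        exact hP (G.info_of_act i j (Finset.mem_range.1 hj) ha hp).2.1
      by_cases hap : a ∈ p
      · have hap' : a ∈ p ++ [c] := by simp [hap]
        simp only [telTerm, hap, hap', if_true, bef_append hap, aft_append G i bt hap, h0, own_nil,
          mul_one]
      · have hap' : a ∉ p ++ [c] := by simp [hap, hca]
        simp [telTerm, hap, hap']

/-- A representative of an information set. -/
def rep (G : EFG) (i : Fin G.n) (j : ℕ) : List ℕ :=
  if hj : j < G.m i then (G.info_nonempty i j hj).choose else []

theorem rep_mem (G : EFG) (i : Fin G.n) (j : ℕ) (hj : j < G.m i) : G.rep i j ∈ G.Info i j := by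
  unfold rep; rw [dif_pos hj]; exact (G.info_nonempty i j hj).choose_spec

/-- Own probability of reaching an information set. -/
def ownJ (G : EFG) (i : Fin G.n) (b : ℕ → ℕ → ℝ) (j : ℕ) : ℝ :=
  own b (G.recordFrom i [] (G.rep i j))

theorem ownJ_eq (G : EFG) (hPR : G.PerfectRecall) (i : Fin G.n) (b : ℕ → ℕ → ℝ) (j : ℕ)
    (hj : j < G.m i) {h : List ℕ} (hh : h ∈ G.Info i j) :
    own b (G.recordFrom i [] h) = G.ownJ i b j := by
  unfold ownJ; rw [hPR i j hj h hh _ (G.rep_mem i j hj)]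

theorem ownJ_nonneg (G : EFG) (i : Fin G.n) (b : ℕ → ℕ → ℝ) (hb : G.IsBehStrategy i b) (j : ℕ)
    (hj : j < G.m i) : 0 ≤ G.ownJ i b j := by
  refine G.own_nonneg i b _ _ fun p c s hl hP => ?_
  have h1 := (G.info_P i j hj (G.rep_mem i j hj)).2.2
  rw [hl] at h1
  obtain ⟨h2, _, h4⟩ := G.mem_info i (G.mem_H_cons h1) (by simpa using hP)
  simpa using (hb _ h2).1 _ h4

/-- Continuation value weighted by the others' reach probabilities. -/
def W (G : EFG) (i : Fin G.n) (β : G.Profile) (bt : ℕ → ℕ → ℝ) (a : ℕ) : ℝ :=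
  ∑ h ∈ G.Zset.filter (fun h => a ∈ h), G.u i h * (G.Sh i β h * G.aft i bt a h)

/-- Payoff as a function of own strategy. -/
def F (G : EFG) (i : Fin G.n) (β : G.Profile) (b : ℕ → ℕ → ℝ) : ℝ :=
  ∑ h ∈ G.Zset, G.u i h * (G.Sh i β h * own b (G.recordFrom i [] h))

theorem uExp_replace (G : EFG) (i : Fin G.n) (β : G.Profile) (b : ℕ → ℕ → ℝ) :
    G.uExp i (G.replace β i b) = G.F i β b := by
  unfold uExp F omega Sh
  refine Finset.sum_congr rfl fun h _ => ?_
  rw [G.prodAlong_eq i, G.prodAlongNot_congr i (G.replace β i b) β]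
  · simp [replace]
  · intro p hp; simp [replace, hp]

theorem uExp_eq (G : EFG) (i : Fin G.n) (β : G.Profile) : G.uExp i β = G.F i β (β i) := by
  unfold uExp F omega Sh
  refine Finset.sum_congr rfl fun h _ => ?_
  rw [G.prodAlong_eq i]

theorem Zset_mem_H (G : EFG) {h : List ℕ} (hh : h ∈ G.Zset) : h ∈ G.H :=
  (Finset.mem_filter.1 hh).1

theorem perf_diff (G : EFG) (hPR : G.PerfectRecall) (i : Fin G.n) (β : G.Profile)
    (b bt : ℕ → ℕ → ℝ) :
    G.F i β b - G.F i β bt = ∑ j ∈ Finset.range (G.m i),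
      G.ownJ i b j * ∑ a ∈ G.infoA i j, (b j a - bt j a) * G.W i β bt a := by
  have h1 : G.F i β b - G.F i β bt = ∑ h ∈ G.Zset, ∑ j ∈ Finset.range (G.m i),
      ∑ a ∈ G.infoA i j, G.u i h * (G.Sh i β h * G.telTerm i b bt h j a) := by
    unfold F
    rw [← Finset.sum_sub_distrib]
    refine Finset.sum_congr rfl fun h hh => ?_
    simp only [← Finset.mul_sum]
    rw [← G.telescope hPR i b bt h (G.Zset_mem_H hh)]
    ring
  rw [h1, Finset.sum_comm]
  refine Finset.sum_congr rfl fun j hj => ?_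
  have hj := Finset.mem_range.1 hj
  rw [Finset.sum_comm, Finset.mul_sum]
  refine Finset.sum_congr rfl fun a ha => ?_
  unfold W
  rw [Finset.sum_filter, Finset.mul_sum, Finset.mul_sum]
  refine Finset.sum_congr rfl fun h hh => ?_
  by_cases hah : a ∈ h
  · have hH := G.Zset_mem_H hh
    rw [← split_eq hah] at hH
    have := (G.info_of_act i j hj ha (G.mem_H_cons hH)).1
    simp only [telTerm, hah, if_true, G.ownJ_eq hPR i b j hj this]
    ring
  · simp [telTerm, hah]

/-! Evaluating the terms of the system -/

theorem rho_before (G : EFG) (hPR : G.PerfectRecall) (i : Fin G.n) (j : ℕ) (hj : j < G.m i)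
    (β βt : G.Profile) {h : List ℕ} (hh : h ∈ G.Info i j) :
    own (G.rho i j β βt i) (G.recordFrom i [] h) = own (β i) (G.recordFrom i [] h) := by
  refine G.own_congr i _ _ _ _ fun p c s hl hP => ?_
  rw [List.nil_append] at hP ⊢
  have hH := (G.info_P i j hj hh).2.2
  rw [hl] at hH
  obtain ⟨h1, h2, h3⟩ := G.mem_info i (G.mem_H_cons hH) hP
  have : ¬ ∃ h ∈ G.Info i (G.infoIdx p), ∃ b ∈ h, b ∈ G.infoA i j := by
    rintro ⟨k, hk, b, hbk, hb⟩
    obtain ⟨l₁, l₂, rfl⟩ := List.append_of_mem hbk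
    have hkH := (G.info_P i _ h1 hk).2.2
    obtain ⟨h4, h5, _⟩ := G.info_of_act i j hj hb (G.mem_H_cons hkH)
    have e1 := G.rk_eq hPR i _ h1 hk h2
    have e2 := G.rk_eq hPR i _ hj h4 hh
    have e3 := G.rk_lt i l₁ b l₂ h5
    have e4 := G.rk_lt i p c s hP
    rw [← hl] at e4
    omega
  simp [rho, this]

theorem rho_after (G : EFG) (i : Fin G.n) (j : ℕ)
    (β βt : G.Profile) {a : ℕ} (ha : a ∈ G.infoA i j) {h : List ℕ} (hh : h ∈ G.H) (hah : a ∈ h) :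
    G.aft i (G.rho i j β βt i) a h = G.aft i (βt i) a h := by
  refine G.own_congr i _ _ _ _ fun p c s hl hP => ?_
  have hH := hh
  rw [← split_eq hah, hl] at hH
  have hH' : (bef a h ++ [a] ++ p) ++ c :: s ∈ G.H := by simpa using hH
  obtain ⟨h1, h2, h3⟩ := G.mem_info i (G.mem_H_cons hH') hP
  have : ∃ h' ∈ G.Info i (G.infoIdx (bef a h ++ [a] ++ p)), ∃ b ∈ h', b ∈ G.infoA i j :=
    ⟨_, h2, a, by simp, ha⟩
  unfold rho
  rw [if_pos ⟨rfl, this⟩]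

theorem info_not_before (G : EFG) (hPR : G.PerfectRecall) (i : Fin G.n) (j : ℕ) (hj : j < G.m i)
    {p s : List ℕ} {c : ℕ} (h : p ++ c :: s ∈ G.Info i j) : p ∉ G.Info i j := by
  intro hp
  have e := G.rk_eq hPR i j hj h hp
  have := G.rk_lt i p c s (G.info_P i j hj hp).1
  omega

theorem skip_eq (G : EFG) (i : Fin G.n) (j : ℕ) (γ : G.Profile) (l pre : List ℕ)
    (hh : ∀ p c s, l = p ++ c :: s → pre ++ p ∉ G.Info i j) :
    G.prodAlongSkip i j γ pre l = G.prodAlong γ pre l := by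
  induction l generalizing pre with
  | nil => rfl
  | cons x l ih =>
    have h0 := hh [] x l (by simp)
    simp only [List.append_nil] at h0
    simp only [prodAlongSkip, prodAlong, h0, if_false]
    rw [ih]
    intro p c s hl
    have := hh (x :: p) c s (by simp [hl])
    simpa using this

theorem nuAux_eq (G : EFG) (i : Fin G.n) (j : ℕ) (γ : G.Profile) (w : List ℕ → ℝ)
    (l pre t : List ℕ) (a : ℕ)
    (hh : ∀ p c s, l = p ++ c :: s → pre ++ p ∉ G.Info i j) (hl : pre ++ l ∈ G.Info i j) :
    G.nuAux i j γ w pre (l ++ a :: t) = w (pre ++ l) * G.prodAlong γ (pre ++ l ++ [a]) t := by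
  induction l generalizing pre with
  | nil =>
    simp only [List.append_nil] at hl
    simp [nuAux, hl]
  | cons x l ih =>
    have h0 := hh [] x l (by simp)
    simp only [List.append_nil] at h0
    simp only [List.cons_append, nuAux, h0, if_false]
    rw [ih]
    · simp
    · intro p c s hl
      have := hh (x :: p) c s (by simp [hl])
      simpa using this
    · simpa using hl

theorem not_rho (G : EFG) (i : Fin G.n) (j : ℕ) (β βt : G.Profile) (l pre : List ℕ) :
    G.prodAlongNot i (G.rho i j β βt) pre l = G.prodAlongNot i β pre l :=
  G.prodAlongNot_congr i _ _ (fun p hp => G.rho_other i j β βt p hp) l pre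

/-- The other players' weights after `a`. -/
def notAft (G : EFG) (i : Fin G.n) (β : G.Profile) (a : ℕ) (h : List ℕ) : ℝ :=
  G.prodAlongNot i β (bef a h ++ [a]) (aftl a h)

theorem Sh_split (G : EFG) (i : Fin G.n) (j : ℕ) (hj : j < G.m i)
    (β : G.Profile) {a : ℕ} (ha : a ∈ G.infoA i j) {h : List ℕ} (hh : h ∈ G.H) (hah : a ∈ h) :
    G.Sh i β h = G.Sh i β (bef a h) * G.notAft i β a h := by
  have hH := hh
  rw [← split_eq hah] at hH
  have hP := (G.info_of_act i j hj ha (G.mem_H_cons hH)).2.1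
  unfold Sh notAft
  conv_lhs => rw [← split_eq hah, prodAlongNot_append]
  simp [prodAlongNot, hP]

theorem after_rho (G : EFG) (i : Fin G.n) (j : ℕ)
    (β βt : G.Profile) {a : ℕ} (ha : a ∈ G.infoA i j) {h : List ℕ} (hh : h ∈ G.H) (hah : a ∈ h) :
    G.prodAlong (G.rho i j β βt) (bef a h ++ [a]) (aftl a h)
      = G.notAft i β a h * G.aft i (βt i) a h := by
  rw [G.prodAlong_eq i, not_rho, ← G.rho_after i j β βt ha hh hah]
  rfl

theorem uWedge_eq (G : EFG) (hPR : G.PerfectRecall) (i : Fin G.n) (j : ℕ) (hj : j < G.m i)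
    (β βt : G.Profile) {a : ℕ} (ha : a ∈ G.infoA i j) :
    G.uWedgeAct i j a (G.rho i j β βt) = G.ownJ i (β i) j * G.W i β (βt i) a := by
  unfold uWedgeAct W
  rw [Finset.mul_sum]
  refine Finset.sum_congr rfl fun h hh => ?_
  obtain ⟨hZ, hah⟩ := Finset.mem_filter.1 hh
  have hH := G.Zset_mem_H hZ
  have hH' := hH
  rw [← split_eq hah] at hH'
  have hI := (G.info_of_act i j hj ha (G.mem_H_cons hH')).1
  have e1 : G.prodAlongSkip i j (G.rho i j β βt) [] h =
      G.prodAlong (G.rho i j β βt) [] (bef a h) *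
      G.prodAlong (G.rho i j β βt) (bef a h ++ [a]) (aftl a h) := by
    conv_lhs => rw [← split_eq hah, prodAlongSkip_append]
    rw [G.skip_eq i j _ (bef a h) []]
    · simp only [List.nil_append, prodAlongSkip, hI, if_true, one_mul]
      rw [G.skip_eq]
      intro p c s hl hp
      have : bef a h ++ a :: p ∈ G.Info i j := by simpa using hp
      exact G.info_not_before hPR i j hj this hI
    · intro p c s hl
      rw [hl] at hI
      simpa using G.info_not_before hPR i j hj hI
  rw [e1, G.after_rho i j β βt ha hH hah, G.prodAlong_eq i, G.rho_before hPR i j hj β βt hI,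
    not_rho, G.ownJ_eq hPR i _ j hj hI, G.Sh_split i j hj β ha hH hah]
  unfold Sh
  ring

/-- Conditional payoff, in terms of the continuation strategy. -/
def D (G : EFG) (i : Fin G.n) (β : G.Profile) (μ : List ℕ → ℝ) (bt : ℕ → ℕ → ℝ) (a : ℕ) : ℝ :=
  ∑ h ∈ G.Zset.filter (fun h => a ∈ h),
    G.u i h * (μ (bef a h) * (G.notAft i β a h * G.aft i bt a h))

theorem uCond_eq (G : EFG) (hPR : G.PerfectRecall) (i : Fin G.n) (j : ℕ) (hj : j < G.m i)
    (β βt : G.Profile) (μ : G.Belief) {a : ℕ} (ha : a ∈ G.infoA i j) :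
    G.uCond i j a (G.rho i j β βt) μ = G.D i β (μ i j) (βt i) a := by
  unfold uCond D nu
  refine Finset.sum_congr rfl fun h hh => ?_
  obtain ⟨hZ, hah⟩ := Finset.mem_filter.1 hh
  have hH := G.Zset_mem_H hZ
  have hH' := hH
  rw [← split_eq hah] at hH'
  have hI := (G.info_of_act i j hj ha (G.mem_H_cons hH')).1
  rw [← G.after_rho i j β βt ha hH hah]
  conv_lhs => rw [← split_eq hah]
  rw [split_eq hah]
  congr 1
  conv_lhs => rw [← split_eq hah]
  rw [G.nuAux_eq]
  · simp
  · intro p c s hl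
    rw [hl] at hI
    simpa using G.info_not_before hPR i j hj hI
  · simpa using hI

theorem W_eq (G : EFG) (i : Fin G.n) (j : ℕ) (hj : j < G.m i)
    (β : G.Profile) (μ : List ℕ → ℝ) (bt : ℕ → ℕ → ℝ)
    (hμ : ∀ h ∈ G.Info i j, G.SInfo i j β * μ h = G.Sh i β h) {a : ℕ} (ha : a ∈ G.infoA i j) :
    G.W i β bt a = G.SInfo i j β * G.D i β μ bt a := by
  unfold W D
  rw [Finset.mul_sum]
  refine Finset.sum_congr rfl fun h hh => ?_
  obtain ⟨hZ, hah⟩ := Finset.mem_filter.1 hh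
  have hH := G.Zset_mem_H hZ
  have hH' := hH
  rw [← split_eq hah] at hH'
  have hI := (G.info_of_act i j hj ha (G.mem_H_cons hH')).1
  rw [G.Sh_split i j hj β ha hH hah, ← hμ _ hI]
  ring

theorem D_local (G : EFG) (hPR : G.PerfectRecall) (i : Fin G.n) (j : ℕ) (hj : j < G.m i)
    (β : G.Profile) (μ : List ℕ → ℝ) (b b' : ℕ → ℕ → ℝ)
    (hb : ∀ q < G.m i, G.rk i (G.rep i j) < G.rk i (G.rep i q) → b q = b' q)
    {a : ℕ} (ha : a ∈ G.infoA i j) :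
    G.D i β μ b a = G.D i β μ b' a := by
  unfold D
  refine Finset.sum_congr rfl fun h hh => ?_
  obtain ⟨hZ, hah⟩ := Finset.mem_filter.1 hh
  have hH := G.Zset_mem_H hZ
  rw [← split_eq hah] at hH
  obtain ⟨hI, hIP, _⟩ := G.info_of_act i j hj ha (G.mem_H_cons hH)
  congr 3
  refine G.own_congr i _ _ _ _ fun p c s hl hP => ?_
  rw [hl] at hH
  have hH' : (bef a h ++ [a] ++ p) ++ c :: s ∈ G.H := by simpa using hH
  obtain ⟨h1, h2, h3⟩ := G.mem_info i (G.mem_H_cons hH') hP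
  rw [hb _ h1]
  rw [← G.rk_eq hPR i _ h1 h2 (G.rep_mem i _ h1), ← G.rk_eq hPR i _ hj hI (G.rep_mem i _ hj)]
  simpa using G.rk_lt i _ a p hIP

/-- Backward induction. -/
theorem backward (m : ℕ) (r : ℕ → ℕ) (A : ℕ → Finset ℕ) (hA : ∀ j < m, (A j).Nonempty)
    (D : ℕ → (ℕ → ℕ → ℝ) → ℕ → ℝ)
    (hloc : ∀ j < m, ∀ b b' : ℕ → ℕ → ℝ, (∀ q < m, r j < r q → b q = b' q) →
      ∀ a ∈ A j, D j b a = D j b' a) :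
    ∃ b : ℕ → ℕ → ℝ, ∀ j < m, ∃ a₀ ∈ A j, (b j = fun a => if a = a₀ then 1 else 0) ∧
      ∀ a ∈ A j, D j b a ≤ D j b a₀ := by
  set R := (Finset.range m).sup r with hR
  have key : ∀ k : ℕ, ∃ b : ℕ → ℕ → ℝ, ∀ j < m, R < r j + k →
      ∃ a₀ ∈ A j, (b j = fun a => if a = a₀ then 1 else 0) ∧ ∀ a ∈ A j, D j b a ≤ D j b a₀ := by
    intro k
    induction k with
    | zero =>
      refine ⟨fun _ _ => 0, fun j hj h => ?_⟩
      have : r j ≤ R := Finset.le_sup (f := r) (Finset.mem_range.2 hj)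
      omega
    | succ k ih =>
      obtain ⟨b, hb⟩ := ih
      have hex : ∀ j, ∃ a₀, j < m → a₀ ∈ A j ∧ ∀ a ∈ A j, D j b a ≤ D j b a₀ := by
        intro j
        by_cases hj : j < m
        · obtain ⟨a₀, h1, h2⟩ := Finset.exists_max_image (A j) (D j b) (hA j hj)
          exact ⟨a₀, fun _ => ⟨h1, h2⟩⟩
        · exact ⟨0, fun h => absurd h hj⟩
      choose f hf using hex
      set b' : ℕ → ℕ → ℝ := fun j => if R < r j + k then b j else
        fun a => if a = f j then 1 else 0 with hb'
      have hag : ∀ j < m, R < r j + (k + 1) → ∀ a ∈ A j, D j b' a = D j b a := by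
        intro j hj hr a ha
        refine hloc j hj _ _ (fun q _ hq => ?_) a ha
        have : R < r q + k := by omega
        simp [hb', this]
      refine ⟨b', fun j hj hr => ?_⟩
      by_cases hk : R < r j + k
      · obtain ⟨a₀, h1, h2, h3⟩ := hb j hj hk
        refine ⟨a₀, h1, ?_, fun a ha => ?_⟩
        · rw [← h2]; simp [hb', hk]
        · rw [hag j hj hr a ha, hag j hj hr a₀ h1]; exact h3 a ha
      · refine ⟨f j, (hf j hj).1, ?_, fun a ha => ?_⟩
        · simp [hb', hk]
        · rw [hag j hj hr a ha, hag j hj hr _ (hf j hj).1]; exact (hf j hj).2 a ha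
  obtain ⟨b, hb⟩ := key (R + 1)
  exact ⟨b, fun j hj => hb j hj (by omega)⟩

theorem Sh_nonneg (G : EFG) (β : G.Profile) (hβ : G.IsBehProfile β) (i : Fin G.n)
    (h : List ℕ) (hh : h ∈ G.H) : 0 ≤ G.Sh i β h := by
  unfold Sh
  induction h using List.reverseRecOn with
  | nil => simp [prodAlongNot]
  | append_singleton p c ih =>
    rw [prodAlongNot_append]
    refine mul_nonneg (ih (G.mem_H_left hh)) ?_
    simp only [List.nil_append, prodAlongNot, mul_one]
    split_ifs with hP
    · exact zero_le_one
    · unfold moveProb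
      cases hq : G.P p with
      | none => exact G.fc_nonneg _ _
      | some k =>
        obtain ⟨h1, _, h3⟩ := G.mem_info k hh hq
        exact (hβ k _ h1).1 _ h3

theorem SInfo_nonneg (G : EFG) (β : G.Profile) (hβ : G.IsBehProfile β) (i : Fin G.n) (j : ℕ)
    (hj : j < G.m i) : 0 ≤ G.SInfo i j β :=
  Finset.sum_nonneg fun h hh => G.Sh_nonneg β hβ i h (G.info_P i j hj hh).2.2

theorem belief_exists (G : EFG) (β : G.Profile) (hβ : G.IsBehProfile β) :
    ∃ μ : G.Belief, ∀ (i : Fin G.n) (j : ℕ), j < G.m i →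
      (∀ h ∈ G.Info i j, G.SInfo i j β * μ i j h = G.Sh i β h ∧ 0 ≤ μ i j h) ∧
      ∑ h ∈ G.Info i j, μ i j h = 1 := by
  refine ⟨fun i j h => if G.SInfo i j β = 0 then ((G.Info i j).card : ℝ)⁻¹ else
    G.Sh i β h / G.SInfo i j β, fun i j hj => ?_⟩
  have hS : ∀ h ∈ G.Info i j, 0 ≤ G.Sh i β h := fun h hh =>
    G.Sh_nonneg β hβ i h (G.info_P i j hj hh).2.2
  by_cases h0 : G.SInfo i j β = 0
  · simp only [h0, if_true]
    refine ⟨fun h hh => ⟨?_, by positivity⟩, ?_⟩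
    · rw [zero_mul]
      exact ((Finset.sum_eq_zero_iff_of_nonneg hS).1 h0 h hh).symm
    · have := (G.info_nonempty i j hj).card_pos
      rw [Finset.sum_const, nsmul_eq_mul]
      exact mul_inv_cancel₀ (by positivity)
  · simp only [h0, if_false]
    refine ⟨fun h hh => ⟨by field_simp, div_nonneg (hS h hh) (G.SInfo_nonneg β hβ i j hj)⟩, ?_⟩
    rw [← Finset.sum_div]
    exact div_self h0

theorem infoA_nonempty (G : EFG) (i : Fin G.n) (j : ℕ) (hj : j < G.m i) :
    (G.infoA i j).Nonempty := by
  have hr := G.rep_mem i j hj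
  obtain ⟨a, ha⟩ := ((G.info_spec i j _ hj).1 hr).2.2.1
  exact ⟨a, (G.mem_infoA i j hj _ hr a).2 ha⟩

end EFG

/-- Theorem 3: `β*` is a Nash equilibrium in behavioral strategies iff the polynomial
system (12) is solvable. -/
theorem stmt6 (G : EFG) (hPR : G.PerfectRecall) (β : G.Profile) (hβ : G.IsBehProfile β) :
    G.IsNash β ↔
      ∃ (βt : G.Profile) (μ : G.Belief) (lam lamt : Fin G.n → ℕ → ℕ → ℝ)
        (ze zet : Fin G.n → ℕ → ℝ),
        (∀ (i : Fin G.n) (j : ℕ), j < G.m i → ∀ a ∈ G.infoA i j,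
          G.uWedgeAct i j a (G.rho i j β βt) + lam i j a - ze i j = 0) ∧
        (∀ (i : Fin G.n) (j : ℕ), j < G.m i → ∀ a ∈ G.infoA i j,
          G.uCond i j a (G.rho i j β βt) μ + lamt i j a - zet i j = 0) ∧
        (∀ (i : Fin G.n) (j : ℕ), j < G.m i → ∀ h ∈ G.Info i j,
          G.SInfo i j β * μ i j h = G.Sh i β h ∧ 0 ≤ μ i j h) ∧
        (∀ (i : Fin G.n) (j : ℕ), j < G.m i →
          (∑ h ∈ G.Info i j, μ i j h = 1) ∧ (∑ a ∈ G.infoA i j, β i j a = 1) ∧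
          (∑ a ∈ G.infoA i j, βt i j a = 1)) ∧
        (∀ (i : Fin G.n) (j : ℕ), j < G.m i → ∀ a ∈ G.infoA i j,
          β i j a * lam i j a = 0 ∧ βt i j a * lamt i j a = 0 ∧
          0 ≤ β i j a ∧ 0 ≤ lam i j a ∧ 0 ≤ βt i j a ∧ 0 ≤ lamt i j a) := by
  constructor
  · rintro ⟨-, hN⟩
    obtain ⟨μ, hμ⟩ := G.belief_exists β hβ
    have hbt := fun i : Fin G.n => EFG.backward (G.m i) (fun j => G.rk i (G.rep i j))
      (G.infoA i) (G.infoA_nonempty i) (fun j b a => G.D i β (μ i j) b a)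
      (fun j hj b b' hb a ha => G.D_local hPR i j hj β (μ i j) b b' hb ha)
    choose βt hβt using hbt
    have hex : ∀ (i : Fin G.n) (j : ℕ), ∃ a₀, j < G.m i → a₀ ∈ G.infoA i j ∧
        (βt i j = fun a => if a = a₀ then 1 else 0) ∧
        ∀ a ∈ G.infoA i j, G.D i β (μ i j) (βt i) a ≤ G.D i β (μ i j) (βt i) a₀ := by
      intro i j
      by_cases hj : j < G.m i
      · obtain ⟨a₀, h⟩ := hβt i j hj
        exact ⟨a₀, fun _ => h⟩
      · exact ⟨0, fun h => absurd h hj⟩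
    choose a₀ ha₀ using hex
    have hsum : ∀ (i : Fin G.n) (j : ℕ), j < G.m i → ∑ a ∈ G.infoA i j, βt i j a = 1 := by
      intro i j hj
      obtain ⟨h1, h2, _⟩ := ha₀ i j hj
      rw [h2]; simp [h1]
    have hnn : ∀ (i : Fin G.n) (j : ℕ), j < G.m i → ∀ a, 0 ≤ βt i j a := by
      intro i j hj a
      rw [(ha₀ i j hj).2.1]
      dsimp only
      split_ifs <;> norm_num
    have hlam : ∀ (i : Fin G.n) (j : ℕ), j < G.m i → ∀ a ∈ G.infoA i j,
        0 ≤ G.ownJ i (β i) j * (G.W i β (βt i) (a₀ i j) - G.W i β (βt i) a) := by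
      intro i j hj a ha
      refine mul_nonneg (G.ownJ_nonneg i _ (hβ i) j hj) ?_
      obtain ⟨h1, _, h3⟩ := ha₀ i j hj
      rw [G.W_eq i j hj β (μ i j) (βt i) (fun h hh => ((hμ i j hj).1 h hh).1) h1,
        G.W_eq i j hj β (μ i j) (βt i) (fun h hh => ((hμ i j hj).1 h hh).1) ha, ← mul_sub]
      exact mul_nonneg (G.SInfo_nonneg β hβ i j hj) (sub_nonneg.2 (h3 a ha))
    refine ⟨βt, μ, fun i j a => G.ownJ i (β i) j * (G.W i β (βt i) (a₀ i j) - G.W i β (βt i) a),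
      fun i j a => G.D i β (μ i j) (βt i) (a₀ i j) - G.D i β (μ i j) (βt i) a,
      fun i j => G.ownJ i (β i) j * G.W i β (βt i) (a₀ i j),
      fun i j => G.D i β (μ i j) (βt i) (a₀ i j), ?_, ?_, ?_, ?_, ?_⟩
    · intro i j hj a ha
      rw [G.uWedge_eq hPR i j hj β βt ha]; ring
    · intro i j hj a ha
      rw [G.uCond_eq hPR i j hj β βt μ ha]; ring
    · exact fun i j hj => (hμ i j hj).1
    · exact fun i j hj => ⟨(hμ i j hj).2, (hβ i j hj).2, hsum i j hj⟩
    · intro i j hj a ha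
      refine ⟨?_, ?_, (hβ i j hj).1 a ha, hlam i j hj a ha, hnn i j hj a,
        sub_nonneg.2 ((ha₀ i j hj).2.2 a ha)⟩
      · have hdev := hN i (βt i) (fun j hj => ⟨fun a _ => hnn i j hj a, hsum i j hj⟩)
        rw [G.uExp_replace, G.uExp_eq] at hdev
        have hpd := G.perf_diff hPR i β (β i) (βt i)
        have hterm : ∀ q ∈ Finset.range (G.m i),
            G.ownJ i (β i) q * ∑ a ∈ G.infoA i q, (β i q a - βt i q a) * G.W i β (βt i) a =
            - ∑ a ∈ G.infoA i q, β i q a *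
              (G.ownJ i (β i) q * (G.W i β (βt i) (a₀ i q) - G.W i β (βt i) a)) := by
          intro q hq
          have hq := Finset.mem_range.1 hq
          obtain ⟨h1, h2, _⟩ := ha₀ i q hq
          have e1 : ∑ a ∈ G.infoA i q, βt i q a * G.W i β (βt i) a
              = G.W i β (βt i) (a₀ i q) := by
            conv_lhs => enter [2, a]; rw [show βt i q a = if a = a₀ i q then 1 else 0 from
              congrFun h2 a]
            simp [h1]
          have e2 : ∑ a ∈ G.infoA i q, β i q a *
              (G.ownJ i (β i) q * (G.W i β (βt i) (a₀ i q) - G.W i β (βt i) a)) =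
              G.ownJ i (β i) q * (G.W i β (βt i) (a₀ i q) * ∑ a ∈ G.infoA i q, β i q a -
                ∑ a ∈ G.infoA i q, β i q a * G.W i β (βt i) a) := by
            rw [Finset.mul_sum, ← Finset.sum_sub_distrib, Finset.mul_sum]
            exact Finset.sum_congr rfl fun a _ => by ring
          rw [e2, (hβ i q hq).2]
          simp only [sub_mul, Finset.sum_sub_distrib, e1]
          ring
        rw [Finset.sum_congr rfl hterm, Finset.sum_neg_distrib] at hpd
        have hnn2 : ∀ q ∈ Finset.range (G.m i), ∀ a ∈ G.infoA i q, 0 ≤ β i q a *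
              (G.ownJ i (β i) q * (G.W i β (βt i) (a₀ i q) - G.W i β (βt i) a)) :=
          fun q hq a ha => mul_nonneg ((hβ i q (Finset.mem_range.1 hq)).1 a ha)
            (hlam i q (Finset.mem_range.1 hq) a ha)
        have hz := le_antisymm (by linarith)
          (Finset.sum_nonneg fun q hq => Finset.sum_nonneg (hnn2 q hq))
        have hz1 := (Finset.sum_eq_zero_iff_of_nonneg
          fun q hq => Finset.sum_nonneg (hnn2 q hq)).1 hz j (Finset.mem_range.2 hj)
        exact (Finset.sum_eq_zero_iff_of_nonneg (hnn2 j (Finset.mem_range.2 hj))).1 hz1 a ha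
      · rw [(ha₀ i j hj).2.1]
        dsimp only
        split_ifs with h
        · rw [h]; ring
        · ring
  · rintro ⟨βt, μ, lam, lamt, ze, zet, h1, h2, h3, h4, h5⟩
    refine ⟨hβ, fun i b hb => ?_⟩
    rw [G.uExp_replace, G.uExp_eq]
    have hA : G.F i β b - G.F i β (βt i) ≤ 0 := by
      rw [G.perf_diff hPR]
      refine Finset.sum_nonpos fun j hj => ?_
      have hj := Finset.mem_range.1 hj
      refine mul_nonpos_of_nonneg_of_nonpos (G.ownJ_nonneg i b hb j hj) ?_
      have e : ∀ a ∈ G.infoA i j, (b j a - βt i j a) * G.W i β (βt i) a =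
          G.SInfo i j β * (zet i j * (b j a - βt i j a) - b j a * lamt i j a) := by
        intro a ha
        have e1 := h2 i j hj a ha
        rw [G.uCond_eq hPR i j hj β βt μ ha] at e1
        rw [G.W_eq i j hj β (μ i j) (βt i) (fun h hh => (h3 i j hj h hh).1) ha]
        have e2 : G.D i β (μ i j) (βt i) a = zet i j - lamt i j a := by linarith
        have e3 := (h5 i j hj a ha).2.1
        rw [e2]
        linear_combination G.SInfo i j β * e3
      rw [Finset.sum_congr rfl e, ← Finset.mul_sum, Finset.sum_sub_distrib, ← Finset.mul_sum,
        Finset.sum_sub_distrib, (hb j hj).2, (h4 i j hj).2.2]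
      refine mul_nonpos_of_nonneg_of_nonpos (G.SInfo_nonneg β hβ i j hj) ?_
      have : 0 ≤ ∑ a ∈ G.infoA i j, b j a * lamt i j a :=
        Finset.sum_nonneg fun a ha => mul_nonneg ((hb j hj).1 a ha) (h5 i j hj a ha).2.2.2.2.2
      linarith
    have hB : 0 ≤ G.F i β (β i) - G.F i β (βt i) := by
      rw [G.perf_diff hPR]
      refine Finset.sum_nonneg fun j hj => ?_
      have hj := Finset.mem_range.1 hj
      rw [Finset.mul_sum]
      have e : ∀ a ∈ G.infoA i j, G.ownJ i (β i) j * ((β i j a - βt i j a) * G.W i β (βt i) a) =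
          ze i j * (β i j a - βt i j a) + βt i j a * lam i j a := by
        intro a ha
        have e1 := h1 i j hj a ha
        rw [G.uWedge_eq hPR i j hj β βt ha] at e1
        have e3 := (h5 i j hj a ha).1
        linear_combination (β i j a - βt i j a) * e1 - e3
      rw [Finset.sum_congr rfl e, Finset.sum_add_distrib, ← Finset.mul_sum,
        Finset.sum_sub_distrib, (h4 i j hj).2.1, (h4 i j hj).2.2]
      have : 0 ≤ ∑ a ∈ G.infoA i j, βt i j a * lam i j a :=
        Finset.sum_nonneg fun a ha => mul_nonneg (h5 i j hj a ha).2.2.2.2.1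
          (h5 i j hj a ha).2.2.2.1
      linarith
    linarith
end
end

section
/- Let Γ be a finite extensive-form game with perfect recall. A behavioral strategy profile β* is a Nash equilibrium in behavioral strategies if and only if there exist a behavioral strategy profile β̃* and a belief system μ* such that: (i) β*^i_{I_i^j}(a') = 0 for all i ∈ N, j ∈ M_i and a', a'' ∈ A(I_i^j) with ω(I_i^j|β*) > 0 and u^i(a'', ϱ^i_{I_i^j}(β*^{-I_i^j}, β̃*), μ* | I_i^j) > u^i(a', ϱ^i_{I_i^j}(β*^{-I_i^j}, β̃*), μ* | I_i^j); (ii) β̃*^i_{I_i^j}(a') = 0 for all i, j and a', a'' ∈ A(I_i^j) with u^i(a'', ϱ^i_{I_i^j}(β*^{-I_i^j}, β̃*), μ* | I_i^j) > u^i(a', ϱ^i_{I_i^j}(β*^{-I_i^j}, β̃*), μ* | I_i^j); and (iii) μ* is self-independent for β*. -/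
open scoped Classical

noncomputable section

namespace EFG

variable {G : EFG}

lemma aux_mem_prefix {l r : List ℕ} (h : l ++ r ∈ G.H) : l ∈ G.H :=
  G.prefixClosed _ h _ (List.prefix_append l r)

lemma aux_mem_step {l r : List ℕ} {b : ℕ} (h : l ++ b :: r ∈ G.H) : l ++ [b] ∈ G.H := by
  apply G.prefixClosed _ h
  exact ⟨r, by simp⟩

lemma aux_mem_infoA {i : Fin G.n} {j : ℕ} {a : ℕ} (hj : j < G.m i) :
    a ∈ G.infoA i j ↔ ∃ h ∈ G.Info i j, h ++ [a] ∈ G.H := by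
  unfold infoA
  rw [Finset.mem_sup]
  constructor
  · rintro ⟨h, hh, ha⟩
    exact ⟨h, hh, (Finset.mem_filter.1 ha).2⟩
  · rintro ⟨h, hh, ha⟩
    exact ⟨h, hh, Finset.mem_filter.2 ⟨G.act_mem _ _ ha, ha⟩⟩

lemma aux_mem_info {i : Fin G.n} {h : List ℕ} {b : ℕ} (hb : h ++ [b] ∈ G.H)
    (hP : G.P h = some i) : G.infoIdx h < G.m i ∧ h ∈ G.Info i (G.infoIdx h) := by
  have hH : h ∈ G.H := aux_mem_prefix hb
  have hlt := G.infoIdx_lt i h hH hP ⟨b, hb⟩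
  exact ⟨hlt, (G.info_spec i _ h hlt).2 ⟨hH, hP, ⟨b, hb⟩, rfl⟩⟩

lemma aux_infoA_iff {i : Fin G.n} {j : ℕ} (hj : j < G.m i) {h : List ℕ} {b : ℕ}
    (hb : h ++ [b] ∈ G.H) :
    b ∈ G.infoA i j ↔ G.P h = some i ∧ G.infoIdx h = j := by
  have hH : h ∈ G.H := aux_mem_prefix hb
  rw [aux_mem_infoA hj]
  constructor
  · rintro ⟨h', hh', hb'⟩
    have h1 := (G.info_spec i j h' hj).1 hh'
    have h2 := G.act_unique h h' b hH h1.1 hb hb'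
    exact ⟨h2.1.trans h1.2.1, h2.2.trans h1.2.2.2⟩
  · rintro ⟨h1, h2⟩
    have := aux_mem_info hb h1
    rw [h2] at this
    exact ⟨h, this.2, hb⟩

lemma aux_infoA_mem {i : Fin G.n} {j : ℕ} (hj : j < G.m i) {h : List ℕ} {b : ℕ}
    (hb : h ++ [b] ∈ G.H) (hA : b ∈ G.infoA i j) : h ∈ G.Info i j := by
  obtain ⟨h1, h2⟩ := (aux_infoA_iff hj hb).1 hA
  have := aux_mem_info hb h1
  rw [h2] at this
  exact this.2

lemma aux_infoA_nonempty {i : Fin G.n} {j : ℕ} (hj : j < G.m i) : (G.infoA i j).Nonempty := by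
  obtain ⟨h, hh⟩ := G.info_nonempty i j hj
  obtain ⟨a, ha⟩ := ((G.info_spec i j h hj).1 hh).2.2.1
  exact ⟨a, (aux_mem_infoA hj).2 ⟨h, hh, ha⟩⟩

lemma aux_record_append (i : Fin G.n) (r : List ℕ) : ∀ (pre s : List ℕ),
    G.recordFrom i pre (r ++ s) = G.recordFrom i pre r ++ G.recordFrom i (pre ++ r) s := by
  induction r with
  | nil => intro pre s; simp [recordFrom]
  | cons b r ih => intro pre s; simp [recordFrom, ih]

/-- The record strictly grows after an own move. -/
lemma aux_record_lt {i : Fin G.n} {l r : List ℕ} {b : ℕ} (hP : G.P l = some i) :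
    (G.recordFrom i [] l).length < (G.recordFrom i [] (l ++ b :: r)).length := by
  rw [aux_record_append]
  simp [recordFrom, hP]

lemma aux_no_repeat (hPR : G.PerfectRecall) {i : Fin G.n} {j : ℕ} (hj : j < G.m i)
    {l r : List ℕ} {b : ℕ} (h1 : l ∈ G.Info i j) : l ++ b :: r ∉ G.Info i j := by
  intro h2
  have h3 := hPR i j hj _ h1 _ h2
  have h4 := aux_record_lt (b := b) (r := r) ((G.info_spec i j l hj).1 h1).2.1
  rw [h3] at h4
  exact lt_irrefl _ h4

lemma aux_nuAux (hPR : G.PerfectRecall) {i : Fin G.n} {j : ℕ} (hj : j < G.m i) (γ : G.Profile)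
    (w : List ℕ → ℝ) (a : ℕ) (l2 : List ℕ) (r : List ℕ) : ∀ (pre : List ℕ),
    pre ++ r ∈ G.Info i j →
    G.nuAux i j γ w pre (r ++ a :: l2) = w (pre ++ r) * G.prodAlong γ (pre ++ r ++ [a]) l2 := by
  induction r with
  | nil => intro pre h; simp at h; simp [nuAux, h]
  | cons b r ih =>
    intro pre h
    have hn : pre ∉ G.Info i j := fun hp => aux_no_repeat hPR hj hp h
    have := ih (pre ++ [b]) (by simpa using h)
    simp only [List.cons_append, nuAux, hn, if_false]
    rw [this]; simp

lemma aux_nu (hPR : G.PerfectRecall) {i : Fin G.n} {j : ℕ} (hj : j < G.m i) (γ : G.Profile)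
    (μ : G.Belief) (a : ℕ) (l1 l2 : List ℕ) (h : l1 ∈ G.Info i j) :
    G.nu i j γ μ (l1 ++ a :: l2) = μ i j l1 * G.prodAlong γ (l1 ++ [a]) l2 := by
  have := aux_nuAux hPR hj γ (μ i j) a l2 l1 [] (by simpa using h)
  simpa [nu] using this

lemma aux_prodAlong_congr {i : Fin G.n} {j : ℕ} {a : ℕ} (ha : a ∈ G.infoA i j) (γ γ' : G.Profile)
    (h1 : ∀ p, p ≠ i → γ p = γ' p)
    (h2 : ∀ q < G.m i, (∃ h ∈ G.Info i q, ∃ b ∈ h, b ∈ G.infoA i j) → γ i q = γ' i q)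
    (r : List ℕ) : ∀ (pre : List ℕ), a ∈ pre → pre ++ r ∈ G.H →
    G.prodAlong γ pre r = G.prodAlong γ' pre r := by
  induction r with
  | nil => intro pre _ _; rfl
  | cons b r ih =>
    intro pre hap hH
    have hb := aux_mem_step hH
    simp only [prodAlong]
    rw [ih (pre ++ [b]) (by simp [hap]) (by simpa using hH)]
    congr 1
    unfold moveProb
    rcases hP : G.P pre with _ | p
    · rfl
    · simp only [Option.elim]
      by_cases hp : p = i
      · subst hp
        obtain ⟨hlt, hI⟩ := aux_mem_info hb hP
        rw [h2 _ hlt ⟨pre, hI, a, hap, ha⟩]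
      · rw [h1 p hp]

lemma aux_uCond_congr (hPR : G.PerfectRecall) {i : Fin G.n} {j : ℕ} (hj : j < G.m i) {a : ℕ}
    (ha : a ∈ G.infoA i j) (γ γ' : G.Profile) (μ : G.Belief)
    (h1 : ∀ p, p ≠ i → γ p = γ' p)
    (h2 : ∀ q < G.m i, (∃ h ∈ G.Info i q, ∃ b ∈ h, b ∈ G.infoA i j) → γ i q = γ' i q) :
    G.uCond i j a γ μ = G.uCond i j a γ' μ := by
  unfold uCond
  refine Finset.sum_congr rfl fun z hz => ?_
  obtain ⟨hzZ, haz⟩ := Finset.mem_filter.1 hz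
  have hzH : z ∈ G.H := (Finset.mem_filter.1 hzZ).1
  obtain ⟨l1, l2, rfl⟩ := List.append_of_mem haz
  have hI := aux_infoA_mem hj (aux_mem_step hzH) ha
  rw [aux_nu hPR hj _ _ _ _ _ hI, aux_nu hPR hj _ _ _ _ _ hI,
    aux_prodAlong_congr ha γ γ' h1 h2 l2 (l1 ++ [a]) (by simp) (by simpa using hzH)]

lemma aux_uCond_rho (hPR : G.PerfectRecall) {i : Fin G.n} {j : ℕ} (hj : j < G.m i) {a : ℕ}
    (ha : a ∈ G.infoA i j) (β βt : G.Profile) (μ : G.Belief) :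
    G.uCond i j a (G.rho i j β βt) μ = G.uCond i j a (G.replace β i (βt i)) μ := by
  apply aux_uCond_congr hPR hj ha
  · intro p hp; funext q; simp [rho, replace, hp]
  · intro q _ hex
    have hc : i = i ∧ ∃ h ∈ G.Info i q, ∃ b ∈ h, b ∈ G.infoA i j := ⟨rfl, hex⟩
    unfold rho replace
    rw [if_pos hc, if_pos rfl]

/-- own realization weight of a record -/
def ownW (b : ℕ → ℕ → ℝ) (l : List (ℕ × ℕ)) : ℝ := (l.map fun p => b p.1 p.2).prod

lemma aux_prod_split (i : Fin G.n) (γ : G.Profile) (r : List ℕ) : ∀ pre : List ℕ,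
    G.prodAlong γ pre r = ownW (γ i) (G.recordFrom i pre r) * G.prodAlongNot i γ pre r := by
  induction r with
  | nil => intro pre; simp [prodAlong, recordFrom, prodAlongNot, ownW]
  | cons b r ih =>
    intro pre
    simp only [prodAlong, recordFrom, prodAlongNot, ih (pre ++ [b])]
    by_cases hP : G.P pre = some i
    · simp [hP, moveProb, ownW]; ring
    · simp [hP]; ring

lemma aux_prodNot_congr (i : Fin G.n) (γ γ' : G.Profile) (h1 : ∀ p, p ≠ i → γ p = γ' p)
    (r : List ℕ) : ∀ pre : List ℕ, G.prodAlongNot i γ pre r = G.prodAlongNot i γ' pre r := by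
  induction r with
  | nil => intro pre; rfl
  | cons b r ih =>
    intro pre
    simp only [prodAlongNot, ih (pre ++ [b])]
    congr 1
    by_cases hP : G.P pre = some i
    · simp [hP]
    · simp only [hP, if_false]
      unfold moveProb
      rcases hq : G.P pre with _ | p
      · rfl
      · have : p ≠ i := by rintro rfl; exact hP hq
        simp [h1 p this]

lemma aux_prodNot_nonneg (i : Fin G.n) (γ : G.Profile) (hγ : G.IsBehProfile γ) (r : List ℕ) :
    ∀ pre : List ℕ, pre ++ r ∈ G.H → 0 ≤ G.prodAlongNot i γ pre r := by
  induction r with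
  | nil => intro pre _; simp [prodAlongNot]
  | cons b r ih =>
    intro pre hH
    have hb := aux_mem_step hH
    simp only [prodAlongNot]
    refine mul_nonneg ?_ (ih _ (by simpa using hH))
    split_ifs
    · exact zero_le_one
    · unfold moveProb
      rcases hP : G.P pre with _ | p
      · exact G.fc_nonneg _ _
      · obtain ⟨hlt, hI⟩ := aux_mem_info hb hP
        exact (hγ p _ hlt).1 b ((aux_infoA_iff hlt hb).2 ⟨hP, rfl⟩)

lemma aux_ownW_nonneg (i : Fin G.n) (b : ℕ → ℕ → ℝ) (hb : G.IsBehStrategy i b) (r : List ℕ) :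
    ∀ pre : List ℕ, pre ++ r ∈ G.H → 0 ≤ ownW b (G.recordFrom i pre r) := by
  induction r with
  | nil => intro pre _; simp [recordFrom, ownW]
  | cons c r ih =>
    intro pre hH
    have hc := aux_mem_step hH
    have h1 := ih (pre ++ [c]) (by simpa using hH)
    simp only [recordFrom]
    split_ifs with hP
    · obtain ⟨hlt, hI⟩ := aux_mem_info hc hP
      have h2 := (hb _ hlt).1 c ((aux_infoA_iff hlt hc).2 ⟨hP, rfl⟩)
      simpa [ownW] using mul_nonneg h2 h1
    · simpa using h1

/-- The common record of an information set. -/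
def recOf (G : EFG) (i : Fin G.n) (j : ℕ) : List (ℕ × ℕ) :=
  if h : (G.Info i j).Nonempty then G.recordFrom i [] h.choose else []

lemma aux_recOf (hPR : G.PerfectRecall) {i : Fin G.n} {j : ℕ} (hj : j < G.m i) {h : List ℕ}
    (hh : h ∈ G.Info i j) : G.recordFrom i [] h = G.recOf i j := by
  have hne : (G.Info i j).Nonempty := ⟨h, hh⟩
  unfold recOf
  rw [dif_pos hne]
  exact hPR i j hj _ hh _ hne.choose_spec

lemma aux_ownW_recOf_nonneg {i : Fin G.n} {j : ℕ} (hj : j < G.m i) (b : ℕ → ℕ → ℝ)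
    (hb : G.IsBehStrategy i b) : 0 ≤ ownW b (G.recOf i j) := by
  have hne := G.info_nonempty i j hj
  unfold recOf
  rw [dif_pos hne]
  exact aux_ownW_nonneg i b hb _ [] ((G.info_spec i j _ hj).1 hne.choose_spec).1

lemma aux_Sh_nonneg {i : Fin G.n} {β : G.Profile} (hβ : G.IsBehProfile β) {h : List ℕ}
    (hh : h ∈ G.H) : 0 ≤ G.Sh i β h := aux_prodNot_nonneg i β hβ h [] hh

lemma aux_SInfo_nonneg {i : Fin G.n} {j : ℕ} (hj : j < G.m i) {β : G.Profile}
    (hβ : G.IsBehProfile β) : 0 ≤ G.SInfo i j β :=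
  Finset.sum_nonneg fun h hh => aux_Sh_nonneg hβ ((G.info_spec i j h hj).1 hh).1

lemma aux_omegaInfo (hPR : G.PerfectRecall) {i : Fin G.n} {j : ℕ} (hj : j < G.m i)
    (β : G.Profile) : G.omegaInfo i j β = ownW (β i) (G.recOf i j) * G.SInfo i j β := by
  unfold omegaInfo SInfo
  rw [Finset.mul_sum]
  refine Finset.sum_congr rfl fun h hh => ?_
  rw [← aux_recOf hPR hj hh]
  exact aux_prod_split i β h []

/-- Telescoping sum. -/
def tele (i : Fin G.n) (γ' γ : G.Profile) : List ℕ → List ℕ → ℝ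
  | _, [] => 0
  | pre, b :: rest =>
    (if G.P pre = some i then (γ' i (G.infoIdx pre) b - γ i (G.infoIdx pre) b) *
      G.omega γ' pre * G.prodAlong γ (pre ++ [b]) rest else 0) + tele i γ' γ (pre ++ [b]) rest

lemma aux_prod_append (γ : G.Profile) (r : List ℕ) : ∀ (pre s : List ℕ),
    G.prodAlong γ pre (r ++ s) = G.prodAlong γ pre r * G.prodAlong γ (pre ++ r) s := by
  induction r with
  | nil => intro pre s; simp [prodAlong]
  | cons b r ih => intro pre s; simp [prodAlong, ih, mul_assoc]

lemma aux_omega_step (γ : G.Profile) (pre : List ℕ) (b : ℕ) :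
    G.omega γ (pre ++ [b]) = G.omega γ pre * G.moveProb γ pre b := by
  unfold omega
  rw [aux_prod_append]
  simp [prodAlong]

lemma aux_tele (i : Fin G.n) (γ' γ : G.Profile) (h1 : ∀ p, p ≠ i → γ' p = γ p) (r : List ℕ) :
    ∀ pre : List ℕ, G.omega γ' pre * (G.prodAlong γ' pre r - G.prodAlong γ pre r) =
      tele i γ' γ pre r := by
  induction r with
  | nil => intro pre; simp [prodAlong, tele]
  | cons b r ih =>
    intro pre
    simp only [prodAlong, tele]
    rw [← ih, aux_omega_step]
    by_cases hP : G.P pre = some i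
    · simp [hP, moveProb]; ring
    · have : G.moveProb γ' pre b = G.moveProb γ pre b := by
        unfold moveProb
        rcases hq : G.P pre with _ | p
        · rfl
        · have : p ≠ i := by rintro rfl; exact hP hq
          simp [h1 p this]
      simp only [hP, if_false, this]; ring

/-- Double sum picking one own action. -/
lemma aux_pick (i : Fin G.n) (f : ℕ → ℕ → ℝ) {pre : List ℕ} {b : ℕ} (hb : pre ++ [b] ∈ G.H) :
    ∑ j ∈ Finset.range (G.m i), ∑ a ∈ G.infoA i j, (if a = b then f j a else 0) =
      if G.P pre = some i then f (G.infoIdx pre) b else 0 := by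
  have h1 : ∀ j ∈ Finset.range (G.m i), ∑ a ∈ G.infoA i j, (if a = b then f j a else 0) =
      if j = G.infoIdx pre then (if G.P pre = some i then f (G.infoIdx pre) b else 0) else 0 := by
    intro j hj
    have hj' := Finset.mem_range.1 hj
    rw [Finset.sum_ite_eq']
    have := aux_infoA_iff hj' hb
    by_cases hA : b ∈ G.infoA i j
    · obtain ⟨h2, h3⟩ := this.1 hA
      simp [hA, h2, h3]
    · rw [if_neg hA]
      split_ifs with h2 h3
      · exact absurd (this.2 ⟨h3, h2.symm⟩) hA
      · rfl
      · rfl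
  rw [Finset.sum_congr rfl h1, Finset.sum_ite_eq']
  by_cases hP : G.P pre = some i
  · rw [if_pos (Finset.mem_range.2 (aux_mem_info hb hP).1)]
  · simp [hP]

lemma aux_tele_sum (hPR : G.PerfectRecall) (i : Fin G.n) (β γ' γ : G.Profile) (μ : G.Belief)
    (hμ : G.SelfIndep β μ) (h1 : ∀ p, p ≠ i → γ' p = β p) (z : List ℕ) (hz : z ∈ G.H)
    (r : List ℕ) : ∀ pre : List ℕ, pre ++ r = z →
    tele i γ' γ pre r = ∑ j ∈ Finset.range (G.m i), ∑ a ∈ G.infoA i j,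
      if a ∈ r then (γ' i j a - γ i j a) * (ownW (γ' i) (G.recOf i j) * G.SInfo i j β) *
        G.nu i j γ μ z else 0 := by
  induction r with
  | nil => intro pre _; simp [tele]
  | cons b r ih =>
    intro pre hpre
    have hH : pre ++ b :: r ∈ G.H := hpre ▸ hz
    have hb := aux_mem_step hH
    simp only [tele]
    rw [ih (pre ++ [b]) (by simpa using hpre)]
    have h2 := aux_pick i (fun j a => (γ' i j a - γ i j a) *
      (ownW (γ' i) (G.recOf i j) * G.SInfo i j β) * G.nu i j γ μ z) hb
    have h3 : (if G.P pre = some i then (γ' i (G.infoIdx pre) b - γ i (G.infoIdx pre) b) *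
      G.omega γ' pre * G.prodAlong γ (pre ++ [b]) r else 0) =
      if G.P pre = some i then (γ' i (G.infoIdx pre) b - γ i (G.infoIdx pre) b) *
      (ownW (γ' i) (G.recOf i (G.infoIdx pre)) * G.SInfo i (G.infoIdx pre) β) *
        G.nu i (G.infoIdx pre) γ μ z else 0 := by
      split_ifs with hP
      · obtain ⟨hlt, hI⟩ := aux_mem_info hb hP
        rw [← hpre, aux_nu hPR hlt γ μ b pre r hI, ← aux_recOf hPR hlt hI]
        have h4 : G.omega γ' pre = ownW (γ' i) (G.recordFrom i [] pre) * G.Sh i β pre := by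
          unfold omega Sh
          rw [aux_prod_split i, aux_prodNot_congr i γ' β h1]
        rw [h4, ← hμ i _ hlt pre hI]
        ring
      · rfl
    rw [h3, ← h2, ← Finset.sum_add_distrib]
    refine Finset.sum_congr rfl fun j hj => ?_
    rw [← Finset.sum_add_distrib]
    refine Finset.sum_congr rfl fun a ha => ?_
    have hj' := Finset.mem_range.1 hj
    by_cases hab : a = b
    · subst hab
      have hn : a ∉ r := by
        intro har
        obtain ⟨l1, l2, rfl⟩ := List.append_of_mem har
        have hp := aux_infoA_mem hj' hb ha
        have hH2 : (pre ++ a :: l1) ++ a :: l2 ∈ G.H := by simpa using hH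
        exact aux_no_repeat hPR hj' hp (aux_infoA_mem hj' (aux_mem_step hH2) ha)
      simp [hn]
    · simp [hab]

/-- Performance difference formula. -/
lemma aux_perf (hPR : G.PerfectRecall) (i : Fin G.n) (β : G.Profile) (b' b : ℕ → ℕ → ℝ)
    (μ : G.Belief) (hμ : G.SelfIndep β μ) :
    G.uExp i (G.replace β i b') - G.uExp i (G.replace β i b) =
      ∑ j ∈ Finset.range (G.m i), (ownW b' (G.recOf i j) * G.SInfo i j β) *
        ∑ a ∈ G.infoA i j, (b' j a - b j a) * G.uCond i j a (G.replace β i b) μ := by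
  have hr : ∀ c : ℕ → ℕ → ℝ, G.replace β i c i = c := fun c => by simp [replace]
  have hne : ∀ c : ℕ → ℕ → ℝ, ∀ p, p ≠ i → G.replace β i c p = β p := fun c p hp => by
    simp [replace, hp]
  unfold uExp
  rw [← Finset.sum_sub_distrib]
  have hz : ∀ z ∈ G.Zset, G.u i z * G.omega (G.replace β i b') z -
      G.u i z * G.omega (G.replace β i b) z =
      ∑ j ∈ Finset.range (G.m i), ∑ a ∈ G.infoA i j,
      (ownW b' (G.recOf i j) * G.SInfo i j β) * ((b' j a - b j a) *
        if a ∈ z then G.u i z * G.nu i j (G.replace β i b) μ z else 0) := by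
    intro z hz
    have hzH : z ∈ G.H := (Finset.mem_filter.1 hz).1
    have h1 := aux_tele i (G.replace β i b') (G.replace β i b)
      (fun p hp => (hne b' p hp).trans (hne b p hp).symm) z []
    rw [aux_tele_sum hPR i β _ _ μ hμ (hne b') z hzH z [] (by simp)] at h1
    have h0 : G.omega (G.replace β i b') [] = 1 := rfl
    rw [h0, one_mul] at h1
    rw [← mul_sub]
    unfold omega
    rw [h1, Finset.mul_sum]
    refine Finset.sum_congr rfl fun j _ => ?_
    rw [Finset.mul_sum]
    refine Finset.sum_congr rfl fun a _ => ?_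
    rw [hr, hr]
    split_ifs
    · ring
    · simp
  rw [Finset.sum_congr rfl hz, Finset.sum_comm]
  refine Finset.sum_congr rfl fun j _ => ?_
  rw [Finset.sum_comm, Finset.mul_sum]
  refine Finset.sum_congr rfl fun a _ => ?_
  unfold uCond
  rw [Finset.sum_filter, Finset.mul_sum, Finset.mul_sum]

lemma aux_opt (s : Finset ℕ) (q f : ℕ → ℝ) (hs : s.Nonempty) (hq : ∑ a ∈ s, q a = 1)
    (hopt : ∀ a' ∈ s, ∀ a'' ∈ s, f a' < f a'' → q a' = 0) :
    ∃ M, (∃ a ∈ s, f a = M) ∧ (∀ a ∈ s, f a ≤ M) ∧ ∑ a ∈ s, q a * f a = M := by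
  obtain ⟨a0, ha0, hmax⟩ := s.exists_max_image f hs
  refine ⟨f a0, ⟨a0, ha0, rfl⟩, hmax, ?_⟩
  have : ∀ a ∈ s, q a * f a = q a * f a0 := by
    intro a ha
    rcases (hmax a ha).lt_or_eq with h | h
    · rw [hopt a ha a0 ha0 h]; simp
    · rw [h]
  rw [Finset.sum_congr rfl this, ← Finset.sum_mul, hq, one_mul]

lemma aux_delta_eq (s : Finset ℕ) (p q f : ℕ → ℝ) (hs : s.Nonempty)
    (hp : ∑ a ∈ s, p a = 1) (hq : ∑ a ∈ s, q a = 1)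
    (hopt : ∀ a' ∈ s, ∀ a'' ∈ s, f a' < f a'' → q a' = 0) :
    ∃ M, (∃ a ∈ s, f a = M) ∧ (∀ a ∈ s, f a ≤ M) ∧
      ∑ a ∈ s, (p a - q a) * f a = - ∑ a ∈ s, p a * (M - f a) := by
  obtain ⟨M, h1, h2, h3⟩ := aux_opt s q f hs hq hopt
  refine ⟨M, h1, h2, ?_⟩
  simp only [sub_mul, mul_sub, Finset.sum_sub_distrib, ← Finset.sum_mul, hp, h3]
  ring

lemma aux_delta_nonpos (s : Finset ℕ) (p q f : ℕ → ℝ) (hs : s.Nonempty)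
    (hp0 : ∀ a ∈ s, 0 ≤ p a) (hp : ∑ a ∈ s, p a = 1) (hq : ∑ a ∈ s, q a = 1)
    (hopt : ∀ a' ∈ s, ∀ a'' ∈ s, f a' < f a'' → q a' = 0) :
    ∑ a ∈ s, (p a - q a) * f a ≤ 0 := by
  obtain ⟨M, h1, h2, h3⟩ := aux_delta_eq s p q f hs hp hq hopt
  rw [h3, neg_nonpos]
  exact Finset.sum_nonneg fun a ha => mul_nonneg (hp0 a ha) (sub_nonneg.2 (h2 a ha))

lemma aux_delta_zero (s : Finset ℕ) (p q f : ℕ → ℝ) (hs : s.Nonempty)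
    (hp : ∑ a ∈ s, p a = 1) (hq : ∑ a ∈ s, q a = 1)
    (hopt : ∀ a' ∈ s, ∀ a'' ∈ s, f a' < f a'' → q a' = 0)
    (hoptp : ∀ a' ∈ s, ∀ a'' ∈ s, f a' < f a'' → p a' = 0) :
    ∑ a ∈ s, (p a - q a) * f a = 0 := by
  obtain ⟨M, ⟨a0, ha0, h1⟩, h2, h3⟩ := aux_delta_eq s p q f hs hp hq hopt
  rw [h3, neg_eq_zero]
  refine Finset.sum_eq_zero fun a ha => ?_
  rcases (h2 a ha).lt_or_eq with h | h
  · rw [hoptp a ha a0 ha0 (h1 ▸ h), zero_mul]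
  · rw [h, sub_self, mul_zero]

lemma aux_delta_conv (s : Finset ℕ) (p q f : ℕ → ℝ) (hs : s.Nonempty)
    (hp0 : ∀ a ∈ s, 0 ≤ p a) (hp : ∑ a ∈ s, p a = 1) (hq : ∑ a ∈ s, q a = 1)
    (hopt : ∀ a' ∈ s, ∀ a'' ∈ s, f a' < f a'' → q a' = 0)
    (h0 : ∑ a ∈ s, (p a - q a) * f a = 0) :
    ∀ a' ∈ s, ∀ a'' ∈ s, f a' < f a'' → p a' = 0 := by
  obtain ⟨M, h1, h2, h3⟩ := aux_delta_eq s p q f hs hp hq hopt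
  rw [h3, neg_eq_zero, Finset.sum_eq_zero_iff_of_nonneg
    (fun a ha => mul_nonneg (hp0 a ha) (sub_nonneg.2 (h2 a ha)))] at h0
  intro a' ha' a'' ha'' hlt
  have := h2 a'' ha''
  rcases mul_eq_zero.1 (h0 a' ha') with h | h
  · exact h
  · linarith

/-- Existence of a self-independent belief system. -/
lemma aux_belief (β : G.Profile) (hβ : G.IsBehProfile β) :
    ∃ μ : G.Belief, G.IsBelief μ ∧ G.SelfIndep β μ := by
  refine ⟨fun i j h => if G.SInfo i j β = 0 then ((G.Info i j).card : ℝ)⁻¹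
    else G.Sh i β h / G.SInfo i j β, ?_, ?_⟩
  · intro i j hj
    have hS := aux_SInfo_nonneg hj hβ
    by_cases h0 : G.SInfo i j β = 0
    · simp only [h0, if_true]
      refine ⟨fun h _ => by positivity, ?_⟩
      have : ((G.Info i j).card : ℝ) ≠ 0 := by
        exact_mod_cast (Finset.card_pos.2 (G.info_nonempty i j hj)).ne'
      simp [this]
    · simp only [h0, if_false]
      refine ⟨fun h hh => div_nonneg
        (aux_Sh_nonneg hβ ((G.info_spec i j h hj).1 hh).1) hS, ?_⟩
      rw [← Finset.sum_div]
      exact div_self h0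
  · intro i j hj h hh
    by_cases h0 : G.SInfo i j β = 0
    · have h1 := h0
      unfold SInfo at h1
      rw [Finset.sum_eq_zero_iff_of_nonneg (fun h hh =>
        aux_Sh_nonneg hβ ((G.info_spec i j h hj).1 hh).1)] at h1
      simp [h0, h1 h hh]
    · simp only [h0, if_false]
      field_simp

/-- Backward induction. -/
lemma aux_backward (hPR : G.PerfectRecall) (i : Fin G.n) (β : G.Profile)
    (hβ : G.IsBehProfile β) (μ : G.Belief) (k : ℕ) :
    ∃ b, G.IsBehStrategy i b ∧ ∀ j < G.m i,
      (Finset.range (G.m i)).sup (fun q => (G.recOf i q).length) < (G.recOf i j).length + k →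
      ∀ a' ∈ G.infoA i j, ∀ a'' ∈ G.infoA i j,
        G.uCond i j a' (G.replace β i b) μ < G.uCond i j a'' (G.replace β i b) μ →
        b j a' = 0 := by
  induction k with
  | zero =>
    refine ⟨β i, hβ i, fun j hj hlt => ?_⟩
    have := Finset.le_sup (f := fun q => (G.recOf i q).length) (Finset.mem_range.2 hj)
    omega
  | succ k ih =>
    obtain ⟨b, hb, hopt⟩ := ih
    set D := (Finset.range (G.m i)).sup (fun q => (G.recOf i q).length) with hD
    have hmax : ∀ j, ∃ a0, j < G.m i → a0 ∈ G.infoA i j ∧ ∀ a ∈ G.infoA i j,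
        G.uCond i j a (G.replace β i b) μ ≤ G.uCond i j a0 (G.replace β i b) μ := by
      intro j
      by_cases hj : j < G.m i
      · obtain ⟨a0, h1, h2⟩ := (G.infoA i j).exists_max_image
          (fun a => G.uCond i j a (G.replace β i b) μ) (aux_infoA_nonempty hj)
        exact ⟨a0, fun _ => ⟨h1, h2⟩⟩
      · exact ⟨0, fun h => absurd h hj⟩
    choose a0 ha0 using hmax
    set b2 : ℕ → ℕ → ℝ := fun j a => if D < (G.recOf i j).length + k then b j a
      else if a = a0 j then 1 else 0 with hb2
    have hU : ∀ j < G.m i, D < (G.recOf i j).length + (k + 1) → ∀ a ∈ G.infoA i j,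
        G.uCond i j a (G.replace β i b2) μ = G.uCond i j a (G.replace β i b) μ := by
      intro j hj hlt a ha
      apply aux_uCond_congr hPR hj ha
      · intro p hp; simp [replace, hp]
      · rintro q hq ⟨h, hh, c, hc, hcA⟩
        obtain ⟨l1, l2, rfl⟩ := List.append_of_mem hc
        have hH := ((G.info_spec i q _ hq).1 hh).1
        have hI := aux_infoA_mem hj (aux_mem_step hH) hcA
        have hlen := aux_record_lt (b := c) (r := l2) ((G.info_spec i j l1 hj).1 hI).2.1
        rw [aux_recOf hPR hj hI, aux_recOf hPR hq hh] at hlen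
        have hc2 : D < (G.recOf i q).length + k := by omega
        simp only [replace, if_true]
        funext x
        simp [hb2, hc2]
    refine ⟨b2, ?_, ?_⟩
    · intro j hj
      by_cases hc : D < (G.recOf i j).length + k
      · have := hb j hj
        simpa [hb2, hc] using this
      · simp only [hb2, hc, if_false]
        refine ⟨fun a _ => by split_ifs <;> norm_num, ?_⟩
        rw [Finset.sum_ite_eq', if_pos (ha0 j hj).1]
    · intro j hj hlt a' ha' a'' ha'' h
      rw [hU j hj hlt a' ha', hU j hj hlt a'' ha''] at h
      by_cases hc : D < (G.recOf i j).length + k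
      · have := hopt j hj hc a' ha' a'' ha'' h
        simpa [hb2, hc] using this
      · simp only [hb2, hc, if_false]
        rw [if_neg]
        rintro rfl
        exact absurd ((ha0 j hj).2 a'' ha'') (not_le.2 h)

lemma aux_replace_self (β : G.Profile) (i : Fin G.n) : G.replace β i (β i) = β := by
  funext p
  unfold replace
  split_ifs with h
  · rw [h]
  · rfl

end EFG

/-- Definition 3 (equivalent definition of Nash equilibrium under conditional expected
payoffs): `β*` is a Nash equilibrium in behavioral strategies iff there exist `β̃*` and a
self-independent belief system `μ*` satisfying local sequential rationality, where the
condition on `β*` is imposed only at information sets reached with positive probability. -/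
theorem stmt8 (G : EFG) (hPR : G.PerfectRecall) (β : G.Profile) (hβ : G.IsBehProfile β) :
    G.IsNash β ↔
      ∃ (βt : G.Profile) (μ : G.Belief), G.IsBehProfile βt ∧
        (∀ (i : Fin G.n) (j : ℕ), j < G.m i → ∀ a' ∈ G.infoA i j, ∀ a'' ∈ G.infoA i j,
          0 < G.omegaInfo i j β →
          G.uCond i j a' (G.rho i j β βt) μ < G.uCond i j a'' (G.rho i j β βt) μ →
          β i j a' = 0) ∧
        (∀ (i : Fin G.n) (j : ℕ), j < G.m i → ∀ a' ∈ G.infoA i j, ∀ a'' ∈ G.infoA i j,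
          G.uCond i j a' (G.rho i j β βt) μ < G.uCond i j a'' (G.rho i j β βt) μ →
          βt i j a' = 0) ∧
        G.IsBelief μ ∧ G.SelfIndep β μ := by
  constructor
  · rintro ⟨-, hN⟩
    obtain ⟨μ, hμ1, hμ2⟩ := EFG.aux_belief β hβ
    have hex : ∀ i : Fin G.n, ∃ b, G.IsBehStrategy i b ∧ ∀ j < G.m i,
        ∀ a' ∈ G.infoA i j, ∀ a'' ∈ G.infoA i j,
        G.uCond i j a' (G.replace β i b) μ < G.uCond i j a'' (G.replace β i b) μ →
        b j a' = 0 := by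
      intro i
      obtain ⟨b, hb, h⟩ := EFG.aux_backward hPR i β hβ μ
        ((Finset.range (G.m i)).sup (fun q => (G.recOf i q).length) + 1)
      exact ⟨b, hb, fun j hj => h j hj (by omega)⟩
    choose βt hβt hopt using hex
    refine ⟨βt, μ, hβt, ?_, ?_, hμ1, hμ2⟩
    · intro i j hj a' ha' a'' ha'' hpos hlt
      rw [EFG.aux_uCond_rho hPR hj ha', EFG.aux_uCond_rho hPR hj ha''] at hlt
      have hperf := EFG.aux_perf hPR i β (β i) (βt i) μ hμ2
      rw [EFG.aux_replace_self] at hperf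
      have hterm : ∀ q ∈ Finset.range (G.m i),
          (EFG.ownW (β i) (G.recOf i q) * G.SInfo i q β) *
          ∑ a ∈ G.infoA i q, (β i q a - βt i q a) * G.uCond i q a (G.replace β i (βt i)) μ
            ≤ 0 := by
        intro q hq
        have hq' := Finset.mem_range.1 hq
        exact mul_nonpos_of_nonneg_of_nonpos
          (mul_nonneg (EFG.aux_ownW_recOf_nonneg hq' _ (hβ i)) (EFG.aux_SInfo_nonneg hq' hβ))
          (EFG.aux_delta_nonpos _ _ _ _ (EFG.aux_infoA_nonempty hq') (hβ i q hq').1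
            (hβ i q hq').2 (hβt i q hq').2 (hopt i q hq'))
      have hsum := le_antisymm (Finset.sum_nonpos hterm)
        (hperf ▸ sub_nonneg.2 (hN i (βt i) (hβt i)))
      rw [Finset.sum_eq_zero_iff_of_nonpos hterm] at hsum
      have h0 := hsum j (Finset.mem_range.2 hj)
      rw [← EFG.aux_omegaInfo hPR hj] at h0
      have h1 := (mul_eq_zero.1 h0).resolve_left hpos.ne'
      exact EFG.aux_delta_conv _ _ _ _ (EFG.aux_infoA_nonempty hj) (hβ i j hj).1
        (hβ i j hj).2 (hβt i j hj).2 (hopt i j hj) h1 a' ha' a'' ha'' hlt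
    · intro i j hj a' ha' a'' ha'' hlt
      rw [EFG.aux_uCond_rho hPR hj ha', EFG.aux_uCond_rho hPR hj ha''] at hlt
      exact hopt i j hj a' ha' a'' ha'' hlt
  · rintro ⟨βt, μ, hβt, hi, hii, hμ1, hμ2⟩
    refine ⟨hβ, fun i b hb => ?_⟩
    have hopt : ∀ j < G.m i, ∀ a' ∈ G.infoA i j, ∀ a'' ∈ G.infoA i j,
        G.uCond i j a' (G.replace β i (βt i)) μ < G.uCond i j a'' (G.replace β i (βt i)) μ →
        βt i j a' = 0 := by
      intro j hj a' ha' a'' ha'' hlt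
      rw [← EFG.aux_uCond_rho hPR hj ha', ← EFG.aux_uCond_rho hPR hj ha''] at hlt
      exact hii i j hj a' ha' a'' ha'' hlt
    have h1 : G.uExp i (G.replace β i b) - G.uExp i (G.replace β i (βt i)) ≤ 0 := by
      rw [EFG.aux_perf hPR i β b (βt i) μ hμ2]
      refine Finset.sum_nonpos fun q hq => ?_
      have hq' := Finset.mem_range.1 hq
      exact mul_nonpos_of_nonneg_of_nonpos
        (mul_nonneg (EFG.aux_ownW_recOf_nonneg hq' _ hb) (EFG.aux_SInfo_nonneg hq' hβ))
        (EFG.aux_delta_nonpos _ _ _ _ (EFG.aux_infoA_nonempty hq') (hb q hq').1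
          (hb q hq').2 (hβt i q hq').2 (hopt q hq'))
    have h2 : G.uExp i β - G.uExp i (G.replace β i (βt i)) = 0 := by
      have hperf := EFG.aux_perf hPR i β (β i) (βt i) μ hμ2
      rw [EFG.aux_replace_self] at hperf
      rw [hperf]
      refine Finset.sum_eq_zero fun q hq => ?_
      have hq' := Finset.mem_range.1 hq
      have hnn := mul_nonneg (EFG.aux_ownW_recOf_nonneg hq' _ (hβ i))
        (EFG.aux_SInfo_nonneg (i := i) hq' hβ)
      rcases hnn.eq_or_lt with h0 | hpos
      · rw [← h0, zero_mul]
      · rw [← EFG.aux_omegaInfo hPR hq'] at hpos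
        rw [EFG.aux_delta_zero _ _ _ _ (EFG.aux_infoA_nonempty hq') (hβ i q hq').2
          (hβt i q hq').2 (hopt q hq'), mul_zero]
        intro a' ha' a'' ha'' hlt
        rw [← EFG.aux_uCond_rho hPR hq' ha', ← EFG.aux_uCond_rho hPR hq' ha''] at hlt
        exact hi i q hq' a' ha' a'' ha'' hpos hlt
    linarith
end
end
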